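/- arXiv:1605.02171 — 2 statements merged into one kernel-verified Lean document; each statement's English description precedes it below -/
import Mathlib

section
/- Let f = h + \overline{g} \in \mathcal{AK}_H with b_1 = g'(0) (so |b_1| < 1). Then the Jacobian J_f(z) = |h'(z)|^2 - |g'(z)|^2 satisfies, for every z \in \mathbb{D}, (1-|b_1|^2) (1-|z|)^{4/\sqrt{3} - 2} / (1+|z|)^{4/\sqrt{3} + 2} \leq J_f(z) \leq (1-|b_1|^2) (1+|z|)^{4/\sqrt{3} - 2} / (1-|z|)^{4/\sqrt{3} + 2}. -/
open Complex Metric ComplexConjugate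

noncomputable section

open Filter Set Topology RealInnerProductSpace

/-!
Write `f = h + conj g`, let `z` lie on the boundary of a disc `D(a, r)` compactly contained in the
unit disc, say `z = a + r u`, and let `c` support the convex set `f(D(a, r))` at `f z`. Then
`⟪c, f⟫` is the real part of the holomorphic function `conj c * h + c * g`, which is maximal over
the disc at `z`. Its first- and second-order conditions along the bounding circle combine to
`-r Re (∂J u + W u³) ≤ J`, where `∂J = ∂J/∂z` and `W = h' g'' - g' h''` are taken at `z`. Letting
`D(a, r)` grow until it is internally tangent to the unit disc, and averaging over the two rotations
of `u` by `±π/6`, for which the terms in `u³` cancel, yields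
`‖(1 - |z|²) ∂J - 2 J conj z‖ ≤ (4/√3) J`. Integration along a radius gives both bounds.

A supporting `c` exists because `f z ∉ f(D(a, r))`, that is, because `f` is univalent. If it were
not, consider the first radius at which two points `z ≠ w` of a circle about the origin share their
image. The support at `f z = f w` puts the segment `f z - t c`, for small `t > 0`, into the images
of the parts of the disc near `z` and near `w`, so that `f` fails to be injective inside the circle.
-/

lemma deriv_deriv_nonpos_of_isLocalMax {φ : ℝ → ℝ} {x : ℝ} (hmax : IsLocalMax φ x)
    (hφ : ContinuousAt φ x) : deriv (deriv φ) x ≤ 0 := by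
  by_contra! hpos
  have hmin : IsLocalMin φ x := isLocalMin_of_deriv_deriv_pos hpos hmax.deriv_eq_zero hφ
  have hconst : φ =ᶠ[𝓝 x] fun _ => φ x := by
    filter_upwards [hmax, hmin] with y hle hge using le_antisymm hle hge
  have hzero : deriv (deriv φ) x = 0 := by
    simpa using hconst.deriv.deriv_eq
  exact hpos.ne' hzero

lemma re_deriv_of_isLocalMax_re {Q : ℂ → ℂ} {x : ℝ} (hQ : AnalyticAt ℂ Q x)
    (hmax : IsLocalMax (fun t : ℝ => (Q t).re) x) :
    (deriv Q x).re = 0 ∧ (deriv (deriv Q) x).re ≤ 0 := by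
  have hderiv : HasDerivAt (fun t : ℝ => (Q t).re) (deriv Q x).re x :=
    hQ.differentiableAt.hasDerivAt.real_of_complex
  have hderiv_eq : deriv (fun t : ℝ => (Q t).re) =ᶠ[𝓝 x] fun t => (deriv Q t).re := by
    filter_upwards [continuous_ofReal.continuousAt.eventually hQ.eventually_analyticAt] with t ht
    exact ht.differentiableAt.hasDerivAt.real_of_complex.deriv
  have hsecond : deriv (deriv fun t : ℝ => (Q t).re) x = (deriv (deriv Q) x).re := by
    rw [hderiv_eq.deriv_eq]
    exact hQ.deriv.differentiableAt.hasDerivAt.real_of_complex.deriv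
  exact ⟨hmax.hasDerivAt_eq_zero hderiv,
    hsecond ▸ deriv_deriv_nonpos_of_isLocalMax hmax hderiv.continuousAt⟩

lemma deriv_comp_rotation {P : ℂ → ℂ} {a ρ w : ℂ}
    (hP : DifferentiableAt ℂ P (a + ρ * exp (I * w))) :
    deriv (fun w => P (a + ρ * exp (I * w))) w =
      deriv P (a + ρ * exp (I * w)) * (I * (ρ * exp (I * w))) := by
  have hcircle : HasDerivAt (fun w => a + ρ * exp (I * w)) (I * (ρ * exp (I * w))) w :=
    ((((hasDerivAt_id w).const_mul I).cexp.const_mul ρ).const_add a).congr_deriv (by simp; ring)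
  exact (hP.hasDerivAt.comp w hcircle).deriv

lemma deriv_deriv_comp_rotation {P : ℂ → ℂ} {a ρ : ℂ} (hP : AnalyticAt ℂ P (a + ρ)) :
    deriv (deriv fun w => P (a + ρ * exp (I * w))) 0 =
      -(deriv (deriv P) (a + ρ) * ρ ^ 2 + deriv P (a + ρ) * ρ) := by
  have hcont : ContinuousAt (fun w => a + ρ * exp (I * w)) 0 := by fun_prop
  have hz : a + ρ * exp (I * 0) = a + ρ := by simp
  have hfirst : deriv (fun w => P (a + ρ * exp (I * w))) =ᶠ[𝓝 0] fun w =>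
      deriv P (a + ρ * exp (I * w)) * (I * (ρ * exp (I * w))) := by
    filter_upwards [hcont.eventually (hz.symm ▸ hP.eventually_analyticAt)] with w hw
    exact deriv_comp_rotation hw.differentiableAt
  have hP' : DifferentiableAt ℂ (deriv P) (a + ρ * exp (I * 0)) :=
    hz.symm ▸ hP.deriv.differentiableAt
  have hcomp : DifferentiableAt ℂ (fun w => deriv P (a + ρ * exp (I * w))) 0 :=
    hP'.fun_comp' 0 (by fun_prop)
  have hvelocity : HasDerivAt (fun w => I * (ρ * exp (I * w))) (-ρ) 0 :=
    ((((hasDerivAt_id (0 : ℂ)).const_mul I).cexp.const_mul ρ).const_mul I).congr_deriv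
      (by simp; linear_combination ρ * I_mul_I)
  rw [hfirst.deriv_eq, (hcomp.hasDerivAt.fun_mul hvelocity).deriv, deriv_comp_rotation hP', hz]
  simp only [mul_zero, exp_zero, mul_one]
  linear_combination deriv (deriv P) (a + ρ) * ρ ^ 2 * I_sq

lemma deriv_of_isLocalMaxOn_re_sphere {P : ℂ → ℂ} {a ρ : ℂ} (hP : AnalyticAt ℂ P (a + ρ))
    (hmax : IsLocalMaxOn (fun w => (P w).re) (sphere a ‖ρ‖) (a + ρ)) :
    (deriv P (a + ρ) * ρ).im = 0 ∧
      -(deriv (deriv P) (a + ρ) * ρ ^ 2).re ≤ (deriv P (a + ρ) * ρ).re := by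
  have hz : a + ρ * exp (I * (0 : ℝ)) = a + ρ := by simp
  have hcircle : Tendsto (fun t : ℝ => a + ρ * exp (I * t)) (𝓝 0) (𝓝[sphere a ‖ρ‖] (a + ρ)) := by
    refine tendsto_nhdsWithin_iff.2 ⟨?_, Eventually.of_forall fun t => ?_⟩
    · exact hz ▸ (by fun_prop : ContinuousAt (fun t : ℝ => a + ρ * exp (I * t)) 0)
    · simp [mul_comm I, norm_exp_ofReal_mul_I]
  have hmaxReal : IsLocalMax (fun t : ℝ => (P (a + ρ * exp (I * t))).re) 0 := by
    simpa only [IsLocalMax, IsMaxFilter, hz] using hcircle.eventually hmax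
  have hQ : AnalyticAt ℂ (fun w => P (a + ρ * exp (I * w))) (0 : ℝ) :=
    AnalyticAt.fun_comp (hz.symm ▸ hP) (by fun_prop)
  obtain ⟨hfirst, hsecond⟩ := re_deriv_of_isLocalMax_re hQ hmaxReal
  rw [deriv_comp_rotation (hz.symm ▸ hP.differentiableAt), hz] at hfirst
  rw [ofReal_zero, deriv_deriv_comp_rotation hP, neg_re, add_re] at hsecond
  refine ⟨?_, by linarith⟩
  have hI : deriv P (a + ρ) * (I * (ρ * exp (I * (0 : ℝ)))) = I * (deriv P (a + ρ) * ρ) := by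
    simp only [ofReal_zero, mul_zero, exp_zero, mul_one]
    ring
  simpa only [hI, I_mul_re, neg_eq_zero] using hfirst

lemma re_deriv_mul_nonneg_of_isLocalMaxOn_re_closedBall {P : ℂ → ℂ} {a ρ : ℂ}
    (hP : DifferentiableAt ℂ P (a + ρ))
    (hmax : IsLocalMaxOn (fun w => (P w).re) (closedBall a ‖ρ‖) (a + ρ)) :
    0 ≤ (deriv P (a + ρ) * ρ).re := by
  have hderiv := reCLM.hasFDerivAt.comp (a + ρ) hP.hasDerivAt.complexToReal_fderiv
  have hcone : -ρ ∈ posTangentConeAt (closedBall a ‖ρ‖) (a + ρ) := by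
    refine mem_posTangentConeAt_of_segment_subset ?_
    exact (convex_closedBall a ‖ρ‖).segment_subset (by simp) (by simp)
  have hnonpos := hmax.hasFDerivWithinAt_nonpos hderiv.hasFDerivWithinAt hcone
  simpa using hnonpos

lemma exists_deriv_eq_of_isLocalMaxOn_re_closedBall {P : ℂ → ℂ} {a u : ℂ} {r : ℝ} (hr : 0 < r)
    (hu : ‖u‖ = 1) (hP : AnalyticAt ℂ P (a + r * u))
    (hmax : IsLocalMaxOn (fun w => (P w).re) (closedBall a r) (a + r * u)) :
    ∃ m : ℝ, 0 ≤ m ∧ deriv P (a + r * u) = m * conj u ∧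
      -r * (deriv (deriv P) (a + r * u) * u ^ 2).re ≤ m := by
  have hρ : ‖(r : ℂ) * u‖ = r := by simp [hu, abs_of_pos hr]
  have hmaxρ : IsLocalMaxOn (fun w => (P w).re) (closedBall a ‖(r : ℂ) * u‖) (a + r * u) := by
    rwa [hρ]
  obtain ⟨htangential, hsecond⟩ :=
    deriv_of_isLocalMaxOn_re_sphere hP (hmaxρ.on_subset sphere_subset_closedBall)
  have hradial := re_deriv_mul_nonneg_of_isLocalMaxOn_re_closedBall hP.differentiableAt hmaxρ
  generalize deriv (deriv P) (a + r * u) = P₂ at *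
  generalize deriv P (a + r * u) = P₁ at *
  rw [mul_left_comm, re_ofReal_mul] at hradial hsecond
  rw [mul_left_comm, im_ofReal_mul] at htangential
  rw [show P₂ * (r * u) ^ 2 = r * (r * (P₂ * u ^ 2)) by ring, re_ofReal_mul,
    re_ofReal_mul] at hsecond
  refine ⟨(P₁ * u).re, nonneg_of_mul_nonneg_right hradial hr, ?_, ?_⟩
  · have hreal : ((P₁ * u).re : ℂ) = P₁ * u :=
      Complex.ext rfl ((mul_eq_zero_iff_left hr.ne').1 htangential).symm
    rw [hreal, mul_assoc, mul_conj, normSq_eq_norm_sq, hu]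
    simp
  · refine le_of_mul_le_mul_left ?_ hr
    linarith

lemma eq_of_injOn_of_mem_closure {X Y : Type*} [TopologicalSpace X] [T2Space X]
    [TopologicalSpace Y] {f : X → Y} {s : Set X} {x y : X} (hinj : InjOn f s) (hs : s ∈ 𝓝 x)
    (hopen : 𝓝 (f x) ≤ map f (𝓝 x)) (hy : y ∈ closure s) (hcont : ContinuousAt f y)
    (heq : f x = f y) : x = y := by
  by_contra hne
  obtain ⟨V, W, hV, hW, hxV, hyW, hVW⟩ := t2_separation hne
  have himage : f '' (V ∩ s) ∈ 𝓝 (f y) :=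
    heq ▸ hopen (image_mem_map (inter_mem (hV.mem_nhds hxV) hs))
  obtain ⟨y', ⟨hy'W, x', ⟨hx'V, hx's⟩, hx'y'⟩, hy's⟩ :=
    mem_closure_iff_nhds.1 hy _ (inter_mem (hW.mem_nhds hyW) (hcont himage))
  exact disjoint_left.1 hVW hx'V (hinj hx's hy's hx'y' ▸ hy'W)

lemma isClosed_setOf_ne_of_locally_injOn {X Y : Type*} [TopologicalSpace X] [T2Space X]
    [TopologicalSpace Y] [T2Space Y] {f : X → Y} {K : Set X} (hK : IsClosed K)
    (hcont : ContinuousOn f K) (hloc : ∀ x ∈ K, ∃ V ∈ 𝓝 x, InjOn f V) :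
    IsClosed {p ∈ K ×ˢ K | f p.1 = f p.2 ∧ p.1 ≠ p.2} := by
  have hclosed : IsClosed {p ∈ K ×ˢ K | f p.1 = f p.2} := by
    have hpair : ContinuousOn (Prod.map f f) (K ×ˢ K) := hcont.prodMap hcont
    exact hpair.preimage_isClosed_of_isClosed (hK.prod hK) isClosed_diagonal
  refine isClosed_of_closure_subset fun p hp => ?_
  obtain ⟨hpK, hpeq⟩ := closure_minimal (fun q hq => And.intro hq.1 hq.2.1) hclosed hp
  refine ⟨hpK, hpeq, fun hdiag => ?_⟩
  obtain ⟨V, hV, hVinj⟩ := hloc p.1 hpK.1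
  obtain ⟨q, hqV, -, hqeq, hqne⟩ :=
    mem_closure_iff_nhds.1 hp (V ×ˢ V) (prod_mem_nhds hV (hdiag ▸ hV))
  exact hqne (hVinj hqV.1 hqV.2 hqeq)

lemma exists_injOn_ball_not_injOn_closedBall {X Y : Type*} [MetricSpace X] [ProperSpace X]
    [TopologicalSpace Y] [T2Space Y] {f : X → Y} {a : X} {R : ℝ}
    (hcont : ContinuousOn f (ball a R)) (hloc : ∀ x ∈ ball a R, ∃ V ∈ 𝓝 x, InjOn f V)
    (hinj : ¬ InjOn f (ball a R)) :
    ∃ r, 0 < r ∧ r < R ∧ InjOn f (ball a r) ∧ ¬ InjOn f (closedBall a r) := by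
  obtain ⟨x₀, hx₀, y₀, hy₀, heq₀, hne₀⟩ : ∃ x ∈ ball a R, ∃ y ∈ ball a R, f x = f y ∧ x ≠ y := by
    simpa only [InjOn, not_forall, exists_prop] using hinj
  obtain ⟨S, hmaxS, hSR⟩ := exists_between (max_lt (mem_ball.1 hx₀) (mem_ball.1 hy₀))
  have hsub : closedBall a S ⊆ ball a R := closedBall_subset_ball hSR
  let K := {p ∈ closedBall a S ×ˢ closedBall a S | f p.1 = f p.2 ∧ p.1 ≠ p.2}
  have hKcompact : IsCompact K :=
    ((isCompact_closedBall a S).prod (isCompact_closedBall a S)).of_isClosed_subset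
      (isClosed_setOf_ne_of_locally_injOn isClosed_closedBall (hcont.mono hsub)
        fun x hx => hloc x (hsub hx)) fun _ hp => hp.1
  have hKne : K.Nonempty := by
    obtain ⟨hx, hy⟩ := max_lt_iff.1 hmaxS
    exact ⟨(x₀, y₀), ⟨hx.le, hy.le⟩, heq₀, hne₀⟩
  obtain ⟨⟨x, y⟩, ⟨⟨hxS, hyS⟩, heq, hne⟩, hmin⟩ :=
    hKcompact.exists_isMinOn hKne (f := fun p => max (dist p.1 a) (dist p.2 a)) (by fun_prop)
  set r := max (dist x a) (dist y a)
  have hrS : r ≤ S := max_le hxS hyS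
  have hnot : ¬ InjOn f (closedBall a r) := fun h =>
    hne (h (le_max_left (dist x a) _) (le_max_right _ (dist y a)) heq)
  refine ⟨r, ?_, hrS.trans_lt hSR, fun x' hx' y' hy' heq' => ?_, hnot⟩
  · by_contra! hr
    exact hnot ((subsingleton_closedBall a hr).injOn f)
  · by_contra hne'
    have hmem : (x', y') ∈ K := ⟨⟨hx'.le.trans hrS, hy'.le.trans hrS⟩, heq', hne'⟩
    exact (hmin hmem).not_gt (max_lt (mem_ball.1 hx') (mem_ball.1 hy'))

lemma eventually_lt_of_hasDerivAt_neg {φ : ℝ → ℝ} {d x : ℝ} (hφ : HasDerivAt φ d x) (hd : d < 0) :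
    ∀ᶠ t in 𝓝[>] x, φ t < φ x := by
  have hslope : ∀ᶠ t in 𝓝[≠] x, slope φ x t < 0 :=
    (hasDerivAt_iff_tendsto_slope.1 hφ).eventually_lt_const hd
  filter_upwards [hslope.filter_mono (nhdsGT_le_nhdsNE x), self_mem_nhdsWithin] with t ht hxt
  exact (slope_neg_iff_of_le (le_of_lt hxt)).1 ht

lemma eventually_add_smul_mem_image_inter_ball {E F : Type*} [NormedAddCommGroup E]
    [InnerProductSpace ℝ E] [CompleteSpace E] [NormedAddCommGroup F] [NormedSpace ℝ F]
    {f : E → F} {L : E ≃L[ℝ] F} {a x : E} {v : F} {V : Set E}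
    (hf : HasStrictFDerivAt f (L : E →L[ℝ] F) x) (hV : V ∈ 𝓝 x) (hv : ⟪x - a, L.symm v⟫ < 0) :
    ∀ᶠ t : ℝ in 𝓝[>] 0, f x + t • v ∈ f '' (V ∩ ball a (dist x a)) := by
  let γ : ℝ → E := fun t => hf.localInverse f L x (f x + t • v)
  have hline : HasDerivAt (fun t : ℝ => f x + t • v) v 0 := by
    simpa using ((hasDerivAt_id (0 : ℝ)).smul_const v).const_add (f x)
  have hline₀ : f x + (0 : ℝ) • v = f x := by simp
  have hγ₀ : γ 0 = x := by simp [γ]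
  have hγ : HasDerivAt γ (L.symm v) 0 :=
    hf.to_localInverse.hasFDerivAt.comp_hasDerivAt_of_eq 0 hline hline₀.symm
  have hdecr : ∀ᶠ t in 𝓝[>] 0, ‖γ t - a‖ ^ 2 < ‖γ 0 - a‖ ^ 2 := by
    refine eventually_lt_of_hasDerivAt_neg (hγ.sub_const a).norm_sq ?_
    rw [hγ₀]
    linarith
  have hnear : ∀ᶠ t in 𝓝[>] 0, γ t ∈ V :=
    nhdsWithin_le_nhds (hγ.continuousAt (hγ₀.symm ▸ hV))
  have hright : ∀ᶠ t : ℝ in 𝓝[>] 0, f (γ t) = f x + t • v := by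
    have htendsto : Tendsto (fun t : ℝ => f x + t • v) (𝓝 0) (𝓝 (f x)) := by
      simpa only [hline₀] using hline.continuousAt.tendsto
    exact nhdsWithin_le_nhds (htendsto.eventually hf.eventually_right_inverse)
  filter_upwards [hdecr, hnear, hright] with t hdist htV hft
  refine ⟨γ t, ⟨htV, ?_⟩, hft⟩
  rw [hγ₀] at hdist
  rw [mem_ball, dist_eq_norm, dist_eq_norm]
  exact lt_of_pow_lt_pow_left₀ 2 (norm_nonneg _) hdist

lemma exists_ne_zero_inner_lt_of_notMem {E : Type*} [NormedAddCommGroup E]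
    [InnerProductSpace ℝ E] [CompleteSpace E] {C : Set E} {p : E} (hconv : Convex ℝ C)
    (hopen : IsOpen C) (hne : C.Nonempty) (hp : p ∉ C) :
    ∃ c : E, c ≠ 0 ∧ ∀ x ∈ C, ⟪c, x⟫ < ⟪c, p⟫ := by
  obtain ⟨l, hl⟩ := geometric_hahn_banach_open_point hconv hopen hp
  have hlt : ∀ x ∈ C, ⟪(InnerProductSpace.toDual ℝ E).symm l, x⟫ <
      ⟪(InnerProductSpace.toDual ℝ E).symm l, p⟫ := fun x hx => by
    simpa only [InnerProductSpace.toDual_symm_apply] using hl x hx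
  refine ⟨_, fun hzero => ?_, hlt⟩
  obtain ⟨x, hx⟩ := hne
  simpa [hzero] using hlt x hx

lemma norm_le_of_re_add_cube_le {a b : ℂ} {C : ℝ}
    (h : ∀ u : ℂ, ‖u‖ = 1 → (a * u + b * u ^ 3).re ≤ C) : ‖a‖ ≤ 2 / √3 * C := by
  obtain ⟨u, hu, hau⟩ : ∃ u : ℂ, ‖u‖ = 1 ∧ a * u = ‖a‖ := by
    rcases eq_or_ne a 0 with rfl | ha
    · exact ⟨1, by simp, by simp⟩
    · have ha' : (‖a‖ : ℂ) ≠ 0 := by simpa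
      refine ⟨conj a / ‖a‖, by simp [ha], ?_⟩
      rw [mul_div_assoc', mul_conj, normSq_eq_norm_sq, ofReal_pow, sq, mul_div_cancel_right₀ _ ha']
  have h3 : √3 ^ 2 = 3 := Real.sq_sqrt (by norm_num)
  have h3C : (√3 : ℂ) ^ 2 = 3 := mod_cast h3
  -- `ω = exp (iπ/6)`, so that `ω + conj ω = √3` and `ω³ + conj ω³ = 0`.
  let ω : ℂ := (√3 + I) / 2
  have hω : ‖ω‖ = 1 := by
    rw [← sq_eq_sq₀ (norm_nonneg ω) zero_le_one, ← normSq_eq_norm_sq, normSq_apply]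
    simp [ω]
    linarith
  have hsum : a * (u * ω) + b * (u * ω) ^ 3 + (a * (u * conj ω) + b * (u * conj ω) ^ 3) =
      ((√3 * ‖a‖ : ℝ) : ℂ) := by
    simp only [ω, map_div₀, map_add, conj_ofReal, conj_I, map_ofNat, ofReal_mul]
    linear_combination (b * u ^ 3 * √3 / 4) * h3C + (3 * b * u ^ 3 * √3 / 4) * I_sq + √3 * hau
  have hle : √3 * ‖a‖ ≤ 2 * C := by
    rw [← ofReal_re (√3 * ‖a‖), ← hsum, add_re, two_mul]
    exact add_le_add (h _ (by simp [hu, hω])) (h _ (by simp [hu, hω]))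
  rw [div_mul_eq_mul_div, le_div_iff₀ (by positivity)]
  linarith

lemma norm_sub_smul_lt_one_sub {E : Type*} [NormedAddCommGroup E] [InnerProductSpace ℝ E]
    {z u : E} {r : ℝ} (hz : ‖z‖ < 1) (hu : ‖u‖ = 1) (hr : 0 ≤ r)
    (hrz : 2 * r * (1 - ⟪z, u⟫) < 1 - ‖z‖ ^ 2) : ‖z - r • u‖ < 1 - r := by
  have hinner : ⟪z, u⟫ ≤ ‖z‖ := by simpa [hu] using real_inner_le_norm z u
  have hr1 : r < 1 := by
    have hprod : 2 * r * (1 - ‖z‖) ≤ 2 * r * (1 - ⟪z, u⟫) := by gcongr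
    nlinarith
  have hcenter : ‖z - r • u‖ ^ 2 = ‖z‖ ^ 2 - 2 * r * ⟪z, u⟫ + r ^ 2 := by
    rw [norm_sub_sq_real, inner_smul_right, norm_smul, hu, Real.norm_eq_abs, mul_one, sq_abs]
    ring
  exact lt_of_pow_lt_pow_left₀ 2 (by linarith) (by rw [hcenter]; linarith)

lemma hasDerivAt_rpow_div_rpow {β κ ρ : ℝ} (hρ0 : -1 < ρ) (hρ1 : ρ < 1) :
    HasDerivAt (fun t : ℝ => (1 - t) ^ (β + κ) / (1 + t) ^ (β - κ))
      (-((1 - ρ) ^ (β + κ) / (1 + ρ) ^ (β - κ)) * ((2 * β + 2 * κ * ρ) / (1 - ρ ^ 2))) ρ := by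
  have hplus : 0 < 1 + ρ := by linarith
  have hminus : 0 < 1 - ρ := by linarith
  have hnum := ((hasDerivAt_id' ρ).const_sub 1).rpow_const (p := β + κ) (Or.inl hminus.ne')
  have hden := ((hasDerivAt_id' ρ).const_add 1).rpow_const (p := β - κ) (Or.inl hplus.ne')
  refine (hnum.div hden (Real.rpow_pos_of_pos hplus _).ne').congr_deriv ?_
  rw [show 1 - ρ ^ 2 = (1 - ρ) * (1 + ρ) by ring, Real.rpow_sub_one hminus.ne',
    Real.rpow_sub_one hplus.ne']
  field_simp
  ring

lemma le_mul_rpow_div_rpow_of_deriv_le {φ φ' : ℝ → ℝ} {β κ x : ℝ}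
    (hφ : ∀ ρ ∈ Ico (0 : ℝ) 1, HasDerivAt φ (φ' ρ) ρ)
    (hle : ∀ ρ ∈ Ico (0 : ℝ) 1, (1 - ρ ^ 2) * φ' ρ ≤ (2 * β + 2 * κ * ρ) * φ ρ)
    (hx : x ∈ Ico (0 : ℝ) 1) : φ x ≤ φ 0 * (1 + x) ^ (β - κ) / (1 - x) ^ (β + κ) := by
  let W : ℝ → ℝ := fun t => (1 - t) ^ (β + κ) / (1 + t) ^ (β - κ)
  have hderiv : ∀ ρ ∈ Ico (0 : ℝ) 1, HasDerivAt (fun t => φ t * W t)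
      (φ' ρ * W ρ + φ ρ * (-W ρ * ((2 * β + 2 * κ * ρ) / (1 - ρ ^ 2)))) ρ := fun ρ hρ =>
    (hφ ρ hρ).mul (hasDerivAt_rpow_div_rpow (by linarith [hρ.1]) hρ.2)
  have hanti : AntitoneOn (fun t => φ t * W t) (Ico 0 1) := by
    refine antitoneOn_of_hasDerivWithinAt_nonpos (convex_Ico 0 1)
      (fun ρ hρ => (hderiv ρ hρ).continuousAt.continuousWithinAt)
      (fun ρ hρ => (hderiv ρ (interior_subset hρ)).hasDerivWithinAt) fun ρ hρ => ?_
    have hρ' := interior_subset hρ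
    have hq : 0 < 1 - ρ ^ 2 := by nlinarith [hρ'.1, hρ'.2]
    have hW : 0 ≤ W ρ := div_nonneg (Real.rpow_nonneg (by linarith [hρ'.2]) _)
      (Real.rpow_nonneg (by linarith [hρ'.1]) _)
    calc φ' ρ * W ρ + φ ρ * (-W ρ * ((2 * β + 2 * κ * ρ) / (1 - ρ ^ 2)))
        = W ρ / (1 - ρ ^ 2) * ((1 - ρ ^ 2) * φ' ρ - (2 * β + 2 * κ * ρ) * φ ρ) := by
          field_simp
          ring
      _ ≤ 0 := mul_nonpos_of_nonneg_of_nonpos (by positivity) (by linarith [hle ρ hρ'])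
  have hplus : 0 < 1 + x := by linarith [hx.1]
  have hminus : 0 < 1 - x := by linarith [hx.2]
  have hcompare : φ x * W x ≤ φ 0 := by
    simpa [W] using hanti ⟨le_rfl, one_pos⟩ hx hx.1
  rw [le_div_iff₀ (by positivity), ← div_le_iff₀ (by positivity), mul_div_assoc]
  exact hcompare

lemma mul_rpow_div_rpow_le_of_le_deriv {φ φ' : ℝ → ℝ} {β κ x : ℝ}
    (hφ : ∀ ρ ∈ Ico (0 : ℝ) 1, HasDerivAt φ (φ' ρ) ρ)
    (hle : ∀ ρ ∈ Ico (0 : ℝ) 1, (-2 * β + 2 * κ * ρ) * φ ρ ≤ (1 - ρ ^ 2) * φ' ρ)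
    (hx : x ∈ Ico (0 : ℝ) 1) : φ 0 * (1 - x) ^ (β - κ) / (1 + x) ^ (β + κ) ≤ φ x := by
  have hneg := le_mul_rpow_div_rpow_of_deriv_le (β := -β) (κ := κ) (fun ρ hρ => (hφ ρ hρ).neg)
    (fun ρ hρ => by simpa using hle ρ hρ) hx
  rw [← neg_add', show -β + κ = -(β - κ) by ring, Real.rpow_neg (by linarith [hx.1]),
    Real.rpow_neg (by linarith [hx.2]), div_inv_eq_mul] at hneg
  rw [mul_div_right_comm, div_eq_mul_inv]
  simpa using hneg

lemma hasDerivAt_norm_sq_ray {k : ℂ → ℂ} {k' e : ℂ} {ρ : ℝ} (hk : HasDerivAt k k' (ρ * e)) :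
    HasDerivAt (fun t : ℝ => ‖k (t * e)‖ ^ 2) (2 * (conj (k (ρ * e)) * k' * e).re) ρ := by
  have hray : HasDerivAt (fun w : ℂ => w * e) e ρ := by
    simpa using (hasDerivAt_id (ρ : ℂ)).mul_const e
  have hcomp : HasDerivAt (fun w : ℂ => k (w * e)) (k' * e) ρ := hk.comp (ρ : ℂ) hray
  refine hcomp.comp_ofReal.norm_sq.congr_deriv ?_
  rw [Complex.inner, mul_comm (k' * e), ← mul_assoc]

/-- The harmonic mapping `h + conj g` with analytic part `h` and co-analytic part `g`. -/
def harmonicMap (h g : ℂ → ℂ) (z : ℂ) : ℂ := h z + conj (g z)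

/-- The Jacobian `J = |h'|² - |g'|²` of `h + conj g`. -/
def jacobian (h g : ℂ → ℂ) (z : ℂ) : ℝ := ‖deriv h z‖ ^ 2 - ‖deriv g z‖ ^ 2

/-- The Wirtinger derivative `∂J/∂z` of the Jacobian of `h + conj g`. -/
def jacobianDz (h g : ℂ → ℂ) (z : ℂ) : ℂ :=
  conj (deriv h z) * deriv (deriv h) z - conj (deriv g z) * deriv (deriv g) z

/-- The Wronskian `h' g'' - g' h''` of the derivatives of the two parts of `h + conj g`. -/
def derivWronskian (h g : ℂ → ℂ) (z : ℂ) : ℂ :=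
  deriv h z * deriv (deriv g) z - deriv g z * deriv (deriv h) z

/-- A holomorphic function whose real part is the component `⟪c, h + conj g⟫` of `h + conj g`
in the direction `c`. -/
def holomorphicComponent (c : ℂ) (h g : ℂ → ℂ) (z : ℂ) : ℂ := conj c * h z + c * g z

/-- `h + conj g` is a sense-preserving harmonic mapping of the open set `U`. -/
structure SensePreservingOn (h g : ℂ → ℂ) (U : Set ℂ) : Prop where
  isOpen : IsOpen U
  differentiableOn_left : DifferentiableOn ℂ h U
  differentiableOn_right : DifferentiableOn ℂ g U
  norm_deriv_lt : ∀ z ∈ U, ‖deriv g z‖ < ‖deriv h z‖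

/-- The class `𝒜𝒦_H` without its normalization at the origin: `h + conj g` is sense-preserving on
the unit disc and maps every disc compactly contained in it onto a convex set. -/
structure IsAK (h g : ℂ → ℂ) : Prop extends SensePreservingOn h g (ball 0 1) where
  convex_image : ∀ a ∈ ball (0 : ℂ) 1, ∀ r : ℝ, 0 < r → r < 1 - ‖a‖ →
    Convex ℝ (harmonicMap h g '' ball a r)

lemma re_holomorphicComponent (c : ℂ) (h g : ℂ → ℂ) (z : ℂ) :
    (holomorphicComponent c h g z).re = ⟪c, harmonicMap h g z⟫ := by
  simp [holomorphicComponent, harmonicMap, Complex.inner]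
  ring

namespace SensePreservingOn

variable {h g : ℂ → ℂ} {U : Set ℂ} {z : ℂ}

lemma analyticAt_left (hf : SensePreservingOn h g U) (hz : z ∈ U) : AnalyticAt ℂ h z :=
  hf.differentiableOn_left.analyticAt (hf.isOpen.mem_nhds hz)

lemma analyticAt_right (hf : SensePreservingOn h g U) (hz : z ∈ U) : AnalyticAt ℂ g z :=
  hf.differentiableOn_right.analyticAt (hf.isOpen.mem_nhds hz)

lemma jacobian_pos (hf : SensePreservingOn h g U) (hz : z ∈ U) : 0 < jacobian h g z :=
  sub_pos.2 (pow_lt_pow_left₀ (hf.norm_deriv_lt z hz) (norm_nonneg _) two_ne_zero)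

lemma continuousOn (hf : SensePreservingOn h g U) : ContinuousOn (harmonicMap h g) U :=
  hf.differentiableOn_left.continuousOn.add
    (continuous_conj.comp_continuousOn hf.differentiableOn_right.continuousOn)

lemma exists_hasStrictFDerivAt (hf : SensePreservingOn h g U) (hz : z ∈ U) :
    ∃ L : ℂ ≃L[ℝ] ℂ, (∀ v, L v = deriv h z * v + conj (deriv g z * v)) ∧
      HasStrictFDerivAt (harmonicMap h g) (L : ℂ →L[ℝ] ℂ) z := by
  have hh := (hf.analyticAt_left hz).hasStrictDerivAt.complexToReal_fderiv
  have hg := (hf.analyticAt_right hz).hasStrictDerivAt.complexToReal_fderiv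
  have hconj := (conjCLE.toContinuousLinearMap.hasStrictFDerivAt (x := g z)).comp z hg
  let T : ℂ →L[ℝ] ℂ := deriv h z • (1 : ℂ →L[ℝ] ℂ) +
    conjCLE.toContinuousLinearMap.comp (deriv g z • (1 : ℂ →L[ℝ] ℂ))
  have hT : ∀ v, T v = deriv h z * v + conj (deriv g z * v) := fun v => by simp [T]
  have hinj : Function.Injective T.toLinearMap := by
    rw [← LinearMap.ker_eq_bot, LinearMap.ker_eq_bot']
    intro v hv
    have hnorm : ‖deriv h z‖ * ‖v‖ = ‖deriv g z‖ * ‖v‖ := by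
      rw [← norm_mul, ← norm_mul, eq_neg_of_add_eq_zero_left ((hT v).symm.trans hv), norm_neg,
        RCLike.norm_conj]
    by_contra hv₀
    exact (hf.norm_deriv_lt z hz).ne' (mul_right_cancel₀ (norm_ne_zero_iff.2 hv₀) hnorm)
  exact ⟨(LinearEquiv.ofInjectiveEndo T.toLinearMap hinj).toContinuousLinearEquiv, hT,
    hh.add hconj⟩

lemma nhds_le_map (hf : SensePreservingOn h g U) (hz : z ∈ U) :
    𝓝 (harmonicMap h g z) ≤ map (harmonicMap h g) (𝓝 z) := by
  obtain ⟨L, -, hL⟩ := hf.exists_hasStrictFDerivAt hz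
  exact hL.map_nhds_eq_of_equiv.ge

lemma isOpen_image (hf : SensePreservingOn h g U) {V : Set ℂ} (hV : IsOpen V) (hVU : V ⊆ U) :
    IsOpen (harmonicMap h g '' V) := by
  refine isOpen_iff_mem_nhds.2 (forall_mem_image.2 fun z hz => ?_)
  exact hf.nhds_le_map (hVU hz) (image_mem_map (hV.mem_nhds hz))

lemma exists_ne_zero_inner_harmonicMap_le (hf : SensePreservingOn h g U) {a : ℂ} {r : ℝ}
    (hr : 0 < r) (hU : ball a r ⊆ U) (hconv : Convex ℝ (harmonicMap h g '' ball a r))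
    (hp : harmonicMap h g z ∉ harmonicMap h g '' ball a r) :
    ∃ c : ℂ, c ≠ 0 ∧ ∀ w ∈ ball a r, ⟪c, harmonicMap h g w⟫ ≤ ⟪c, harmonicMap h g z⟫ := by
  obtain ⟨c, hc, hlt⟩ := exists_ne_zero_inner_lt_of_notMem hconv (hf.isOpen_image isOpen_ball hU)
    ((nonempty_ball.2 hr).image _) hp
  exact ⟨c, hc, fun w hw => (hlt _ (mem_image_of_mem _ hw)).le⟩

lemma exists_injOn_nhds (hf : SensePreservingOn h g U) (hz : z ∈ U) :
    ∃ V ∈ 𝓝 z, InjOn (harmonicMap h g) V := by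
  obtain ⟨L, -, hL⟩ := hf.exists_hasStrictFDerivAt hz
  let φ := hL.toOpenPartialHomeomorph (harmonicMap h g)
  exact ⟨φ.source, φ.open_source.mem_nhds hL.mem_toOpenPartialHomeomorph_source, φ.injOn⟩

lemma analyticAt_holomorphicComponent (hf : SensePreservingOn h g U) (hz : z ∈ U) (c : ℂ) :
    AnalyticAt ℂ (holomorphicComponent c h g) z :=
  (analyticAt_const.mul (hf.analyticAt_left hz)).add
    (analyticAt_const.mul (hf.analyticAt_right hz))

lemma deriv_holomorphicComponent (hf : SensePreservingOn h g U) (hz : z ∈ U) (c : ℂ) :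
    deriv (holomorphicComponent c h g) z = holomorphicComponent c (deriv h) (deriv g) z :=
  (((hf.analyticAt_left hz).differentiableAt.hasDerivAt.const_mul (conj c)).add
    ((hf.analyticAt_right hz).differentiableAt.hasDerivAt.const_mul c)).deriv

lemma deriv_deriv_holomorphicComponent (hf : SensePreservingOn h g U) (hz : z ∈ U) (c : ℂ) :
    deriv (deriv (holomorphicComponent c h g)) z =
      holomorphicComponent c (deriv (deriv h)) (deriv (deriv g)) z := by
  have hderiv : deriv (holomorphicComponent c h g) =ᶠ[𝓝 z]
      holomorphicComponent c (deriv h) (deriv g) := by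
    filter_upwards [hf.isOpen.mem_nhds hz] with w hw using hf.deriv_holomorphicComponent hw c
  rw [hderiv.deriv_eq]
  exact (((hf.analyticAt_left hz).deriv.differentiableAt.hasDerivAt.const_mul (conj c)).add
    ((hf.analyticAt_right hz).deriv.differentiableAt.hasDerivAt.const_mul c)).deriv

lemma deriv_holomorphicComponent_ne_zero (hf : SensePreservingOn h g U) (hz : z ∈ U) {c : ℂ}
    (hc : c ≠ 0) : holomorphicComponent c (deriv h) (deriv g) z ≠ 0 := by
  intro hzero
  have hnorm : ‖c‖ * ‖deriv h z‖ = ‖c‖ * ‖deriv g z‖ := by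
    rw [← norm_mul c (deriv g z), ← RCLike.norm_conj c, ← norm_mul,
      eq_neg_of_add_eq_zero_left hzero, norm_neg]
  exact (hf.norm_deriv_lt z hz).ne' (mul_left_cancel₀ (norm_ne_zero_iff.2 hc) hnorm)

lemma exists_holomorphicComponent_deriv_eq (hf : SensePreservingOn h g U) {a c u : ℂ} {r : ℝ}
    (hr : 0 < r) (hu : ‖u‖ = 1) (hU : closedBall a r ⊆ U) (hz : a + r * u = z) (hc : c ≠ 0)
    (hmax : ∀ w ∈ ball a r, ⟪c, harmonicMap h g w⟫ ≤ ⟪c, harmonicMap h g z⟫) :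
    ∃ m : ℝ, 0 < m ∧ holomorphicComponent c (deriv h) (deriv g) z = m * conj u ∧
      -r * (holomorphicComponent c (deriv (deriv h)) (deriv (deriv g)) z * u ^ 2).re ≤ m := by
  subst hz
  have hzU : a + r * u ∈ U := hU (by simp [hu, abs_of_pos hr])
  have hmaxClosed : IsMaxOn (fun w => (holomorphicComponent c h g w).re)
      (closedBall a r) (a + r * u) := by
    rw [← closure_ball a hr.ne'] at hU ⊢
    refine IsMaxOn.closure (fun w hw => ?_) fun w hw => ?_
    · simpa only [re_holomorphicComponent, mem_ofPred_eq] using hmax w hw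
    · exact (continuous_re.continuousAt.comp
        (hf.analyticAt_holomorphicComponent (hU hw) c).continuousAt).continuousWithinAt
  obtain ⟨m, hm, hfirst, hsecond⟩ := exists_deriv_eq_of_isLocalMaxOn_re_closedBall hr hu
    (hf.analyticAt_holomorphicComponent hzU c) hmaxClosed.localize
  rw [hf.deriv_holomorphicComponent hzU] at hfirst
  rw [hf.deriv_deriv_holomorphicComponent hzU] at hsecond
  refine ⟨m, hm.lt_of_ne' ?_, hfirst, hsecond⟩
  rintro rfl
  exact hf.deriv_holomorphicComponent_ne_zero hzU hc (by simpa using hfirst)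

lemma eventually_sub_smul_mem_image (hf : SensePreservingOn h g U) {a c : ℂ} {r : ℝ} {V : Set ℂ}
    (hV : V ∈ 𝓝 z) (hr : 0 < r) (hU : closedBall a r ⊆ U) (hz : dist z a = r) (hc : c ≠ 0)
    (hmax : ∀ w ∈ ball a r, ⟪c, harmonicMap h g w⟫ ≤ ⟪c, harmonicMap h g z⟫) :
    ∀ᶠ t : ℝ in 𝓝[>] 0, harmonicMap h g z + t • -c ∈ harmonicMap h g '' (V ∩ ball a r) := by
  have hrC : (r : ℂ) ≠ 0 := mod_cast hr.ne'
  let u := (z - a) / r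
  have hru : r * u = z - a := mul_div_cancel₀ _ hrC
  have hu : ‖u‖ = 1 := by
    simp [u, ← dist_eq_norm, hz, abs_of_pos hr, hr.ne']
  obtain ⟨m, hm, hfirst, -⟩ := hf.exists_holomorphicComponent_deriv_eq hr hu hU
    (by rw [hru, add_sub_cancel]) hc hmax
  obtain ⟨L, hL, hderiv⟩ := hf.exists_hasStrictFDerivAt (hU hz.le)
  have hinward : ⟪z - a, L.symm (-c)⟫ < 0 := by
    have hpair : m * ⟪z - a, L.symm (-c)⟫ = -(r * ‖c‖ ^ 2) := by
      calc m * ⟪z - a, L.symm (-c)⟫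
          = r * (holomorphicComponent c (deriv h) (deriv g) z * L.symm (-c)).re := by
            rw [hfirst, ← hru, Complex.inner, ← re_ofReal_mul, ← re_ofReal_mul, map_mul,
              conj_ofReal]
            ring_nf
        _ = r * ⟪c, L (L.symm (-c))⟫ := by
            rw [hL]
            congr 1
            simp [holomorphicComponent, Complex.inner]
            ring
        _ = -(r * ‖c‖ ^ 2) := by simp
    have hpos : 0 < r * ‖c‖ ^ 2 := by positivity
    exact neg_of_mul_neg_right (hpair.trans_lt (neg_neg_of_pos hpos)) hm.le
  exact hz ▸ eventually_add_smul_mem_image_inter_ball hderiv hV hinward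

lemma jacobian_mul_holomorphicComponent_deriv_deriv {c u : ℂ} {m : ℝ} (hu : ‖u‖ = 1)
    (hc : holomorphicComponent c (deriv h) (deriv g) z = m * conj u) :
    jacobian h g z * (holomorphicComponent c (deriv (deriv h)) (deriv (deriv g)) z * u ^ 2) =
      m * (jacobianDz h g z * u + derivWronskian h g z * u ^ 3) := by
  have huu : u * conj u = 1 := by rw [mul_conj, normSq_eq_norm_sq, hu]; simp
  have hconj := congrArg conj hc
  simp only [holomorphicComponent, map_add, map_mul, conj_conj, conj_ofReal] at hc hconj
  simp only [jacobian, holomorphicComponent, jacobianDz, derivWronskian, ofReal_sub, ofReal_pow,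
    ← mul_conj']
  linear_combination
    deriv (deriv h) z * u ^ 2 * (conj (deriv h z) * hc - deriv g z * hconj) +
    deriv (deriv g) z * u ^ 2 * (deriv h z * hconj - conj (deriv g z) * hc) +
    m * u * (conj (deriv h z) * deriv (deriv h) z - conj (deriv g z) * deriv (deriv g) z) * huu

lemma hasDerivAt_jacobian_ray (hf : SensePreservingOn h g U) {e : ℂ} {ρ : ℝ} (hU : ρ * e ∈ U) :
    HasDerivAt (fun t : ℝ => jacobian h g (t * e)) (2 * (jacobianDz h g (ρ * e) * e).re) ρ := by
  have hh := hasDerivAt_norm_sq_ray (hf.analyticAt_left hU).deriv.differentiableAt.hasDerivAt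
  have hg := hasDerivAt_norm_sq_ray (hf.analyticAt_right hU).deriv.differentiableAt.hasDerivAt
  refine (hh.sub hg).congr_deriv ?_
  rw [jacobianDz, sub_mul, sub_re, mul_sub]

lemma injOn_closedBall (hf : SensePreservingOn h g U) {a : ℂ} {r : ℝ} (hr : 0 < r)
    (hU : closedBall a r ⊆ U) (hconv : Convex ℝ (harmonicMap h g '' ball a r))
    (hinj : InjOn (harmonicMap h g) (ball a r)) : InjOn (harmonicMap h g) (closedBall a r) := by
  have hinterior : ∀ x ∈ ball a r, ∀ y ∈ closedBall a r,
      harmonicMap h g x = harmonicMap h g y → x = y := fun x hx y hy =>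
    eq_of_injOn_of_mem_closure hinj (isOpen_ball.mem_nhds hx)
      (hf.nhds_le_map (hU (ball_subset_closedBall hx))) (by rwa [closure_ball a hr.ne'])
      (hf.continuousOn.continuousAt (hf.isOpen.mem_nhds (hU hy)))
  intro x hx y hy heq
  rcases mem_closedBall.1 hx |>.lt_or_eq with hxr | hxr
  · exact hinterior x hxr y hy heq
  rcases mem_closedBall.1 hy |>.lt_or_eq with hyr | hyr
  · exact (hinterior y hyr x hx heq.symm).symm
  have hp : harmonicMap h g x ∉ harmonicMap h g '' ball a r := by
    rintro ⟨w, hw, hwx⟩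
    exact (mem_ball.1 hw).ne (hinterior w hw x hx hwx ▸ hxr)
  obtain ⟨c, hc, hmax⟩ := hf.exists_ne_zero_inner_harmonicMap_le hr
    (ball_subset_closedBall.trans hU) hconv hp
  by_contra hne
  obtain ⟨V, W, hV, hW, hxV, hyW, hVW⟩ := t2_separation hne
  have hpullback_x := hf.eventually_sub_smul_mem_image (hV.mem_nhds hxV) hr hU hxr hc hmax
  have hpullback_y := hf.eventually_sub_smul_mem_image (hW.mem_nhds hyW) hr hU hyr hc (heq ▸ hmax)
  rw [← heq] at hpullback_y
  obtain ⟨t, ⟨x', ⟨hx'V, hx'⟩, hx't⟩, ⟨y', ⟨hy'W, hy'⟩, hy't⟩⟩ :=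
    (hpullback_x.and hpullback_y).exists
  exact disjoint_left.1 hVW hx'V (hinj hx' hy' (hx't.trans hy't.symm) ▸ hy'W)

lemma injOn_ball (hf : SensePreservingOn h g U) {a : ℂ} {R : ℝ} (hU : ball a R ⊆ U)
    (hconv : ∀ r, 0 < r → r < R → Convex ℝ (harmonicMap h g '' ball a r)) :
    InjOn (harmonicMap h g) (ball a R) := by
  by_contra hnot
  obtain ⟨r, hr, hrR, hinj, hninj⟩ := exists_injOn_ball_not_injOn_closedBall
    (hf.continuousOn.mono hU) (fun x hx => hf.exists_injOn_nhds (hU hx)) hnot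
  exact hninj (hf.injOn_closedBall hr ((closedBall_subset_ball hrR).trans hU) (hconv r hr hrR) hinj)

lemma neg_mul_re_le_jacobian (hf : SensePreservingOn h g U) {a u : ℂ} {r : ℝ} (hr : 0 < r)
    (hu : ‖u‖ = 1) (hU : closedBall a r ⊆ U) (hz : a + r * u = z)
    (hconv : Convex ℝ (harmonicMap h g '' ball a r))
    (hp : harmonicMap h g z ∉ harmonicMap h g '' ball a r) :
    -r * (jacobianDz h g z * u + derivWronskian h g z * u ^ 3).re ≤ jacobian h g z := by
  have hzU : z ∈ U := hU (by simp [← hz, hu, abs_of_pos hr])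
  obtain ⟨c, hc, hmax⟩ := hf.exists_ne_zero_inner_harmonicMap_le hr
    (ball_subset_closedBall.trans hU) hconv hp
  obtain ⟨m, hm, hfirst, hsecond⟩ := hf.exists_holomorphicComponent_deriv_eq hr hu hU hz hc hmax
  refine le_of_mul_le_mul_left ?_ hm
  calc m * (-r * (jacobianDz h g z * u + derivWronskian h g z * u ^ 3).re)
      = jacobian h g z *
          (-r * (holomorphicComponent c (deriv (deriv h)) (deriv (deriv g)) z * u ^ 2).re) := by
        have hidentity := congrArg re (jacobian_mul_holomorphicComponent_deriv_deriv hu hfirst)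
        rw [re_ofReal_mul, re_ofReal_mul] at hidentity
        linear_combination r * hidentity
    _ ≤ jacobian h g z * m := mul_le_mul_of_nonneg_left hsecond (hf.jacobian_pos hzU).le
    _ = m * jacobian h g z := mul_comm _ _

end SensePreservingOn

namespace IsAK

variable {h g : ℂ → ℂ} {z : ℂ}

lemma injOn (hf : IsAK h g) : InjOn (harmonicMap h g) (ball 0 1) :=
  hf.injOn_ball Subset.rfl fun r hr hr1 =>
    hf.convex_image 0 (mem_ball_self one_pos) r hr (by simpa using hr1)

lemma neg_mul_re_le_jacobian_of_lt (hf : IsAK h g) {u : ℂ} {r : ℝ} (hz : z ∈ ball (0 : ℂ) 1)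
    (hu : ‖u‖ = 1) (hr : 0 < r) (hrz : 2 * r * (1 - ⟪z, u⟫) < 1 - ‖z‖ ^ 2) :
    -r * (jacobianDz h g z * u + derivWronskian h g z * u ^ 3).re ≤ jacobian h g z := by
  have hcenter : ‖z - r * u‖ < 1 - r := by
    simpa using norm_sub_smul_lt_one_sub (by simpa using hz) hu hr.le hrz
  have hU : closedBall (z - r * u) r ⊆ ball 0 1 :=
    closedBall_subset_ball' (by rw [dist_zero_right]; linarith)
  have hdist : dist z (z - r * u) = r := by simp [hu, abs_of_pos hr]
  refine hf.toSensePreservingOn.neg_mul_re_le_jacobian hr hu hU (sub_add_cancel z _)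
    (hf.convex_image _ (hU (mem_closedBall_self hr.le)) r hr (by linarith)) ?_
  rintro ⟨w, hw, hwz⟩
  obtain rfl := hf.injOn (hU (ball_subset_closedBall hw)) hz hwz
  exact (mem_ball.1 hw).ne hdist

lemma neg_mul_re_le (hf : IsAK h g) {u : ℂ} (hz : z ∈ ball (0 : ℂ) 1) (hu : ‖u‖ = 1) :
    -(1 - ‖z‖ ^ 2) * (jacobianDz h g z * u + derivWronskian h g z * u ^ 3).re ≤
      2 * (1 - ⟪z, u⟫) * jacobian h g z := by
  have hz1 : ‖z‖ < 1 := by simpa using hz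
  have hD : 0 < 2 * (1 - ⟪z, u⟫) := by
    have hinner : ⟪z, u⟫ ≤ ‖z‖ := by simpa [hu] using real_inner_le_norm z u
    linarith
  have hq : 0 < 1 - ‖z‖ ^ 2 := by nlinarith [norm_nonneg z]
  have hR : 0 < (1 - ‖z‖ ^ 2) / (2 * (1 - ⟪z, u⟫)) := div_pos hq hD
  -- The right endpoint is the radius of the disc through `z`, with outward normal `u`, that is
  -- internally tangent to the unit circle.
  have hlimit := le_on_closure (s := Ioo 0 ((1 - ‖z‖ ^ 2) / (2 * (1 - ⟪z, u⟫))))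
    (f := fun r => -r * (jacobianDz h g z * u + derivWronskian h g z * u ^ 3).re)
    (g := fun _ => jacobian h g z)
    (fun r hr => hf.neg_mul_re_le_jacobian_of_lt hz hu hr.1
      (by linarith [(lt_div_iff₀ hD).1 hr.2])) (by fun_prop) (by fun_prop)
    (by rw [closure_Ioo hR.ne]; exact right_mem_Icc.2 hR.le)
  rw [neg_mul, div_mul_eq_mul_div, ← neg_div, ← neg_mul, div_le_iff₀ hD] at hlimit
  linarith

lemma norm_jacobianDz_sub_le (hf : IsAK h g) (hz : z ∈ ball (0 : ℂ) 1) :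
    ‖(1 - ‖z‖ ^ 2) * jacobianDz h g z - 2 * jacobian h g z * conj z‖ ≤
      4 / √3 * jacobian h g z := by
  have hcubic : ∀ u : ℂ, ‖u‖ = 1 →
      (-((1 - ‖z‖ ^ 2) * jacobianDz h g z - 2 * jacobian h g z * conj z) * u
        + -((1 - ‖z‖ ^ 2) * derivWronskian h g z) * u ^ 3).re ≤ 2 * jacobian h g z := by
    intro u hu
    calc (-((1 - ‖z‖ ^ 2) * jacobianDz h g z - 2 * jacobian h g z * conj z) * u
          + -((1 - ‖z‖ ^ 2) * derivWronskian h g z) * u ^ 3).re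
        = -(1 - ‖z‖ ^ 2) * (jacobianDz h g z * u + derivWronskian h g z * u ^ 3).re
          + 2 * jacobian h g z * ⟪z, u⟫ := by
          rw [Complex.inner, ← re_ofReal_mul, ← re_ofReal_mul, ← add_re]
          push_cast
          ring_nf
      _ ≤ 2 * jacobian h g z := by linarith [hf.neg_mul_re_le hz hu]
  rw [← norm_neg]
  exact (norm_le_of_re_add_cube_le hcubic).trans_eq (by ring)

lemma abs_jacobianDz_ray_sub_le (hf : IsAK h g) {e : ℂ} {ρ : ℝ} (he : ‖e‖ = 1)
    (hρ : ρ ∈ Ico (0 : ℝ) 1) :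
    |(1 - ρ ^ 2) * (jacobianDz h g (ρ * e) * e).re - 2 * ρ * jacobian h g (ρ * e)| ≤
      4 / √3 * jacobian h g (ρ * e) := by
  have hnorm : ‖(ρ : ℂ) * e‖ = ρ := by simp [he, abs_of_nonneg hρ.1]
  have hee : conj e * e = 1 := by rw [conj_mul', he]; simp
  have hre : (1 - ρ ^ 2) * (jacobianDz h g (ρ * e) * e).re - 2 * ρ * jacobian h g (ρ * e) =
      (((1 - (ρ : ℂ) ^ 2) * jacobianDz h g (ρ * e)
        - 2 * jacobian h g (ρ * e) * conj (ρ * e)) * e).re := by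
    have hexpand : ((1 - (ρ : ℂ) ^ 2) * jacobianDz h g (ρ * e)
        - 2 * jacobian h g (ρ * e) * conj (ρ * e)) * e =
        ((1 - ρ ^ 2 : ℝ) : ℂ) * (jacobianDz h g (ρ * e) * e)
          - ((2 * ρ * jacobian h g (ρ * e) : ℝ) : ℂ) := by
      push_cast
      rw [map_mul, conj_ofReal]
      linear_combination -2 * ρ * (jacobian h g (ρ * e) : ℂ) * hee
    rw [hexpand, sub_re, re_ofReal_mul, ofReal_re]
  have hbound := hf.norm_jacobianDz_sub_le (mem_ball_zero_iff.2 (hnorm.trans_lt hρ.2))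
  rw [hnorm] at hbound
  rw [hre]
  exact (abs_re_le_norm _).trans (by rwa [norm_mul, he, mul_one])

end IsAK

theorem AK_jacobian_bounds_general {h g : ℂ → ℂ} (hf : IsAK h g) {z : ℂ}
    (hz : z ∈ ball (0 : ℂ) 1) :
    jacobian h g 0 * (1 - ‖z‖) ^ (4 / √3 - 2) / (1 + ‖z‖) ^ (4 / √3 + 2) ≤ jacobian h g z ∧
      jacobian h g z ≤
        jacobian h g 0 * (1 + ‖z‖) ^ (4 / √3 - 2) / (1 - ‖z‖) ^ (4 / √3 + 2) := by
  obtain ⟨e, he, hze⟩ : ∃ e : ℂ, ‖e‖ = 1 ∧ ‖z‖ * e = z :=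
    ⟨exp (arg z * I), norm_exp_ofReal_mul_I _, norm_mul_exp_arg_mul_I z⟩
  let φ : ℝ → ℝ := fun ρ => jacobian h g (ρ * e)
  have hz' : ‖z‖ ∈ Ico (0 : ℝ) 1 := ⟨norm_nonneg z, by simpa using hz⟩
  have hφz : φ ‖z‖ = jacobian h g z := by simp only [φ, hze]
  have hφ₀ : φ 0 = jacobian h g 0 := by simp [φ]
  have hderiv : ∀ ρ ∈ Ico (0 : ℝ) 1, HasDerivAt φ (2 * (jacobianDz h g (ρ * e) * e).re) ρ :=
    fun ρ hρ => hf.hasDerivAt_jacobian_ray (by simpa [he, abs_of_nonneg hρ.1] using hρ.2)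
  have hbound := fun (ρ : ℝ) (hρ : ρ ∈ Ico (0 : ℝ) 1) =>
    abs_le.1 (hf.abs_jacobianDz_ray_sub_le he hρ)
  rw [← hφz, ← hφ₀]
  exact ⟨mul_rpow_div_rpow_le_of_le_deriv hderiv
      (fun ρ hρ => by linarith [(hbound ρ hρ).1]) hz',
    le_mul_rpow_div_rpow_of_deriv_le hderiv
      (fun ρ hρ => by linarith [(hbound ρ hρ).2]) hz'⟩

/-- Jacobian bounds: for `f = h + conj g ∈ 𝒜𝒦_H` with `b₁ = g'(0)`
(so `|b₁| < 1`), the Jacobian `J_f(z) = |h'(z)|² - |g'(z)|²` satisfies, for `z ∈ 𝔻`,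
`(1-|b₁|²)(1-|z|)^{4/√3-2}/(1+|z|)^{4/√3+2} ≤ J_f(z)
  ≤ (1-|b₁|²)(1+|z|)^{4/√3-2}/(1-|z|)^{4/√3+2}`. -/
theorem AK_jacobian_bounds (h g : ℂ → ℂ)
    (hh : DifferentiableOn ℂ h (ball (0:ℂ) 1))
    (hg : DifferentiableOn ℂ g (ball (0:ℂ) 1))
    (hsp : ∀ z ∈ ball (0:ℂ) 1, ‖deriv g z‖ < ‖deriv h z‖)
    (h0 : h 0 = 0) (g0 : g 0 = 0) (hd1 : deriv h 0 = 1) (hb1 : ‖deriv g 0‖ < 1)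
    (hconv : ∀ a ∈ ball (0:ℂ) 1, ∀ r : ℝ, 0 < r → r < 1 - ‖a‖ →
        Convex ℝ ((fun z => h z + conj (g z)) '' ball a r)) :
    ∀ z ∈ ball (0:ℂ) 1,
      (1 - ‖deriv g 0‖ ^ 2) * (1 - ‖z‖) ^ (4 / Real.sqrt 3 - 2)
          / (1 + ‖z‖) ^ (4 / Real.sqrt 3 + 2)
        ≤ ‖deriv h z‖ ^ 2 - ‖deriv g z‖ ^ 2 ∧
      ‖deriv h z‖ ^ 2 - ‖deriv g z‖ ^ 2
        ≤ (1 - ‖deriv g 0‖ ^ 2) * (1 + ‖z‖) ^ (4 / Real.sqrt 3 - 2)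
          / (1 - ‖z‖) ^ (4 / Real.sqrt 3 + 2) := by
  intro z hz
  simpa [jacobian, hd1] using AK_jacobian_bounds_general ⟨⟨isOpen_ball, hh, hg, hsp⟩, hconv⟩ hz
end
end

section
/- Let a, b satisfy either a, b \in (-1,\infty) with ab > 0, or a, b \in \mathbb{C} \setminus \{0\} with b = \overline{a}; let c be a positive real number with c > \mathrm{Re}(a+b) + 1, and let \alpha \in \mathbb{C} with |\alpha| < 1. If ab\,|\alpha| \cdot \frac{\Gamma(c)\Gamma(c-a-b-1)}{\Gamma(c-a)\Gamma(c-b)} \leq 1 (this quantity being a positive real number), then the Taylor coefficients b_n = \frac{\alpha}{2} \frac{(a)_n (b)_n}{(c)_n n!} of g_2(z) = (\alpha/2)(F(a,b;c;z) - 1) satisfy \sum_{n=1}^{\infty} n |b_n| \leq 1/2; consequently f_2(z) = z + \overline{(\alpha/2)(F(a,b;c;z) - 1)} is uniformly starlike in \mathbb{D}. -/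
open Complex Metric ComplexConjugate

noncomputable section

/-- The Pochhammer symbol `(x)ₙ = x(x+1)⋯(x+n-1)` for `x : ℂ`. -/
def poch (x : ℂ) (n : ℕ) : ℂ := (ascPochhammer ℂ n).eval x

/-- The Gaussian hypergeometric function `F(a,b;c;z) = ∑ (a)ₙ(b)ₙ/((c)ₙ n!) zⁿ`. -/
def hypF (a b c z : ℂ) : ℂ :=
  ∑' n : ℕ, poch a n * poch b n / (poch c n * (Nat.factorial n : ℂ)) * z ^ n

/-- The analytic condition (due to Kanas–Ponnusamy–Sairam) characterizing uniform
starlikeness used in the paper, taken here as the formal definition of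
"`h + conj g` is uniformly starlike in `𝔻`". -/
def UniformlyStarlikeOnDisk (h g : ℂ → ℂ) : Prop :=
  (h 0 + conj (g 0) = 0) ∧
  (∀ z ∈ ball (0:ℂ) 1, ‖deriv g z‖ < ‖deriv h z‖) ∧
  (∀ z ∈ ball (0:ℂ) 1, ∀ ζ ∈ ball (0:ℂ) 1, z ≠ ζ →
    0 ≤ (((h z + conj (g z)) - (h ζ + conj (g ζ)))
        / ((z - ζ) * deriv h z - conj (z - ζ) * conj (deriv g z))).re) ∧
  (∀ z ∈ ball (0:ℂ) 1, z ≠ 0 →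
    0 < ((h z + conj (g z))
        / (z * deriv h z - conj z * conj (deriv g z))).re)

/-- The Taylor coefficient `bₙ = (α/2) (a)ₙ(b)ₙ/((c)ₙ n!)` of
`g₂(z) = (α/2)(F(a,b;c;z) - 1)`. -/
def bc2 (a b c α : ℂ) (n : ℕ) : ℂ :=
  α / 2 * (poch a n * poch b n) / (poch c n * (Nat.factorial n : ℂ))

/-!
The hypothesis on `Γ` says `‖a b α F(a+1, b+1; c+1; 1) / c‖ ≤ 1`, by Gauss's summation theorem
`F(a, b; c; 1) = Γ(c) Γ(c-a-b) / (Γ(c-a) Γ(c-b))`. Up to the factor `α / 2`, the left-hand side is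
`∑ n bₙ`, and the terms `n bₙ / α` all have the same argument, so the bound passes to `∑ n |bₙ|`.

Gauss's theorem follows from the contiguous relation
`c (c-a-b) F(a, b; c; 1) = (c-a) (c-b) F(a, b; c+1; 1)`: iterate it `m` times and let `m → ∞`;
then `F(a, b; c+m; 1) → 1`, and the quotient of Pochhammer symbols tends to the quotient of
Gamma values by Euler's limit formula.

Finally `∑ n |bₙ| ≤ 1/2` gives `|g'| ≤ 1/2` on the disk, so both the numerator and the denominator
in the definition of uniform starlikeness, divided by `z - ζ`, are within `1/2` of `1`.
-/

open Filter Topology Asymptotics Finset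
open scoped Nat

local notation "hypCoeff" => ordinaryHypergeometricCoefficient

section Pochhammer

lemma add_natCast_ne_zero_of_ne_neg {R : Type*} [AddGroupWithOne R] {x : R}
    (hx : ∀ k : ℕ, x ≠ -k) (n : ℕ) : x + n ≠ 0 :=
  fun h => hx n (eq_neg_of_add_eq_zero_left h)

lemma add_natCast_ne_neg {R : Type*} [AddGroupWithOne R] {x : R} (hx : ∀ k : ℕ, x ≠ -k)
    (m k : ℕ) : x + m ≠ -k := by
  intro h
  refine hx (m + k) ?_
  rw [eq_sub_of_add_eq h, Nat.cast_add, neg_add_rev, sub_eq_add_neg]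

lemma poch_zero (x : ℂ) : poch x 0 = 1 := by
  simp [poch]

lemma poch_succ (x : ℂ) (n : ℕ) : poch x (n + 1) = poch x n * (x + n) :=
  ascPochhammer_succ_eval n x

lemma poch_succ_left (x : ℂ) (n : ℕ) : poch x (n + 1) = x * poch (x + 1) n := by
  simp [poch, ascPochhammer_succ_left, Polynomial.eval_comp]

lemma poch_eq_prod_range (x : ℂ) (n : ℕ) : poch x n = ∏ k ∈ range n, (x + k) := by
  induction n with
  | zero => exact poch_zero x
  | succ n ih => rw [poch_succ, prod_range_succ, ih]

lemma poch_ne_zero {x : ℂ} (hx : ∀ k : ℕ, x ≠ -k) (n : ℕ) : poch x n ≠ 0 := by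
  rw [poch_eq_prod_range, prod_ne_zero_iff]
  exact fun k _ => add_natCast_ne_zero_of_ne_neg hx k

lemma poch_one (n : ℕ) : poch 1 n = (n ! : ℂ) :=
  ascPochhammer_eval_one ℂ n

end Pochhammer

section GammaSeq

lemma gammaSeq_eq_div_poch (z : ℂ) (n : ℕ) :
    GammaSeq z n = (n : ℂ) ^ z * (n ! : ℂ) / poch z (n + 1) := by
  rw [GammaSeq, poch_eq_prod_range]

/-- At a pole of `Γ`, both `Γ` and all but finitely many terms of `GammaSeq` take the junk value
`0`, whose inverse `0` is the true value of `1 / Γ`. -/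
lemma tendsto_inv_gammaSeq (z : ℂ) :
    Tendsto (fun n => (GammaSeq z n)⁻¹) atTop (𝓝 (Gamma z)⁻¹) := by
  by_cases hz : Gamma z = 0
  · obtain ⟨k, rfl⟩ := (Gamma_eq_zero_iff z).1 hz
    rw [hz, inv_zero]
    refine tendsto_const_nhds.congr' ?_
    filter_upwards [eventually_ge_atTop k] with n hn
    have hpoch : poch (-k) (n + 1) = 0 :=
      ascPochhammer_eval_neg_coe_nat_of_lt (Nat.lt_succ_of_le hn)
    rw [gammaSeq_eq_div_poch, hpoch, div_zero, inv_zero]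
  · exact (GammaSeq_tendsto_Gamma z).inv₀ hz

lemma tendsto_gammaSeq_mul_div_gammaSeq_mul (u v x y : ℂ) :
    Tendsto (fun n => GammaSeq u n * GammaSeq v n / (GammaSeq x n * GammaSeq y n)) atTop
      (𝓝 (Gamma u * Gamma v / (Gamma x * Gamma y))) := by
  simp only [div_eq_mul_inv, mul_inv]
  exact ((GammaSeq_tendsto_Gamma u).mul (GammaSeq_tendsto_Gamma v)).mul
    ((tendsto_inv_gammaSeq x).mul (tendsto_inv_gammaSeq y))

lemma poch_mul_div_poch_mul (x y u v : ℂ) {n : ℕ} (hn : n ≠ 0) :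
    poch x (n + 1) * poch y (n + 1) / (poch u (n + 1) * poch v (n + 1)) =
      (n : ℂ) ^ (x + y - u - v) *
        (GammaSeq u n * GammaSeq v n / (GammaSeq x n * GammaSeq y n)) := by
  have hn' : (n : ℂ) ≠ 0 := Nat.cast_ne_zero.2 hn
  have hpow (z : ℂ) : (n : ℂ) ^ z ≠ 0 := by simp [cpow_eq_zero_iff, hn']
  have hfact : (n ! : ℂ) ≠ 0 := Nat.cast_ne_zero.2 n.factorial_ne_zero
  simp only [gammaSeq_eq_div_poch]
  rw [cpow_sub _ _ hn', cpow_sub _ _ hn', cpow_add _ _ hn']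
  simp only [div_eq_mul_inv, mul_inv, inv_inv]
  have := hpow x
  have := hpow y
  have := hpow u
  have := hpow v
  field_simp

end GammaSeq

section Coefficients

variable (a b c : ℂ)

lemma hypCoeff_eq_poch (n : ℕ) :
    hypCoeff a b c n = poch a n * poch b n / (poch c n * (n ! : ℂ)) := by
  simp only [ordinaryHypergeometricCoefficient, poch]
  ring

lemma hypCoeff_zero : hypCoeff a b c 0 = 1 := by
  simp [hypCoeff_eq_poch, poch_zero]

lemma hypCoeff_succ (n : ℕ) :
    hypCoeff a b c (n + 1) = hypCoeff a b c n * ((a + n) * (b + n) / (c + n) / (n + 1)) := by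
  simp only [hypCoeff_eq_poch, poch_succ, Nat.factorial_succ, div_eq_mul_inv, Nat.cast_mul,
    Nat.cast_add_one, mul_inv]
  ring

lemma succ_mul_hypCoeff_succ (n : ℕ) :
    (n + 1) * hypCoeff a b c (n + 1) = a * b / c * hypCoeff (a + 1) (b + 1) (c + 1) n := by
  have hn : (n : ℂ) + 1 ≠ 0 := Nat.cast_add_one_ne_zero n
  simp only [hypCoeff_eq_poch, poch_succ_left, Nat.factorial_succ]
  push_cast
  field_simp

lemma hypCoeff_succ_isBigO :
    (fun n => hypCoeff a b c (n + 1)) =O[atTop] fun n => (n : ℝ) ^ ((a + b - c).re - 1) := by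
  have hratio := (tendsto_gammaSeq_mul_div_gammaSeq_mul c 1 a b).isBigO_one ℝ
  have hpow : (fun n : ℕ => (n : ℂ) ^ (a + b - c - 1)) =O[atTop]
      fun n => (n : ℝ) ^ ((a + b - c).re - 1) := by
    refine IsBigO.of_bound 1 ?_
    filter_upwards [eventually_gt_atTop 0] with n hn
    rw [norm_natCast_cpow_of_pos hn, one_mul, sub_re _ 1, one_re]
    exact le_abs_self _
  refine ((hpow.mul hratio).congr' ?_ (by simp only [mul_one]; rfl))
  filter_upwards [eventually_ne_atTop 0] with n hn
  rw [hypCoeff_eq_poch, ← poch_one, poch_mul_div_poch_mul a b c 1 hn]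

variable {a b c}

lemma summable_hypCoeff (h : (a + b).re < c.re) : Summable (hypCoeff a b c) := by
  rw [← summable_nat_add_iff 1]
  refine summable_of_isBigO_nat (Real.summable_nat_rpow.2 ?_) (hypCoeff_succ_isBigO a b c)
  rw [sub_re]
  linarith

lemma tendsto_hypCoeff_zero (h : (a + b).re < c.re + 1) :
    Tendsto (hypCoeff a b c) atTop (𝓝 0) := by
  rw [← tendsto_add_atTop_iff_nat 1]
  refine (hypCoeff_succ_isBigO a b c).trans_tendsto ?_
  have hexp : 0 < 1 - (a + b - c).re := by
    rw [sub_re]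
    linarith
  simpa only [Function.comp_def, neg_sub] using
    (tendsto_rpow_neg_atTop hexp).comp tendsto_natCast_atTop_atTop

lemma tendsto_natCast_mul_hypCoeff_zero (h : (a + b).re < c.re) :
    Tendsto (fun n : ℕ => (n : ℂ) * hypCoeff a b c n) atTop (𝓝 0) := by
  rw [← tendsto_add_atTop_iff_nat 1]
  have hshift : ((a + 1) + (b + 1)).re < (c + 1).re + 1 := by
    simp only [add_re, one_re] at h ⊢
    linarith
  simpa only [Nat.cast_add_one, succ_mul_hypCoeff_succ, mul_zero] using
    (tendsto_hypCoeff_zero hshift).const_mul (a * b / c)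

end Coefficients

section GaussSummation

variable {a b c : ℂ}

lemma hypCoeff_add_one_right (hc : ∀ k : ℕ, c ≠ -k) (n : ℕ) :
    hypCoeff a b (c + 1) n = c * hypCoeff a b c n / (c + n) := by
  have hc0 : c ≠ 0 := by simpa using hc 0
  have hcn := add_natCast_ne_zero_of_ne_neg hc n
  have hpoch : poch (c + 1) n = poch c n * (c + n) / c := by
    rw [eq_div_iff hc0, ← poch_succ, poch_succ_left, mul_comm]
  simp only [hypCoeff_eq_poch, hpoch]
  field_simp

lemma sum_range_hypCoeff_contiguous (hc : ∀ k : ℕ, c ≠ -k) (N : ℕ) :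
    c * (c - a - b) * ∑ n ∈ range N, hypCoeff a b c n =
      (c - a) * (c - b) * ∑ n ∈ range N, hypCoeff a b (c + 1) n - c * (N * hypCoeff a b c N) := by
  induction N with
  | zero => simp
  | succ N ih =>
    have hcN := add_natCast_ne_zero_of_ne_neg hc N
    have hN : (N : ℂ) + 1 ≠ 0 := Nat.cast_add_one_ne_zero N
    rw [sum_range_succ, sum_range_succ, mul_add, ih, hypCoeff_add_one_right hc, hypCoeff_succ]
    push_cast
    field_simp
    ring

lemma tsum_hypCoeff_contiguous (hc : ∀ k : ℕ, c ≠ -k) (h : (a + b).re < c.re) :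
    c * (c - a - b) * ∑' n, hypCoeff a b c n =
      (c - a) * (c - b) * ∑' n, hypCoeff a b (c + 1) n := by
  have h' : (a + b).re < (c + 1).re := by
    rw [add_re c, one_re]
    linarith
  have hlim := ((summable_hypCoeff h').hasSum.tendsto_sum_nat.const_mul ((c - a) * (c - b))).sub
    ((tendsto_natCast_mul_hypCoeff_zero h).const_mul c)
  simp only [← sum_range_hypCoeff_contiguous hc, mul_zero, sub_zero] at hlim
  exact tendsto_nhds_unique ((summable_hypCoeff h).hasSum.tendsto_sum_nat.const_mul _) hlim

lemma poch_mul_tsum_hypCoeff (hc : ∀ k : ℕ, c ≠ -k) (h : (a + b).re < c.re) (m : ℕ) :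
    poch c m * poch (c - a - b) m * ∑' n, hypCoeff a b c n =
      poch (c - a) m * poch (c - b) m * ∑' n, hypCoeff a b (c + m) n := by
  induction m with
  | zero => simp [poch_zero]
  | succ m ih =>
    have hm : (a + b).re < (c + m).re := by
      rw [add_re c, natCast_re]
      linarith [m.cast_nonneg (α := ℝ)]
    have hstep := tsum_hypCoeff_contiguous (add_natCast_ne_neg hc m) hm
    simp only [poch_succ, Nat.cast_succ, ← add_assoc]
    linear_combination (c + m) * (c - a - b + m) * ih + poch (c - a) m * poch (c - b) m * hstep

lemma norm_le_norm_add_ofReal {w : ℂ} {r : ℝ} (hw : 0 ≤ w.re) (hr : 0 ≤ r) :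
    ‖w‖ ≤ ‖w + r‖ := by
  rw [← sq_le_sq₀ (norm_nonneg _) (norm_nonneg _), ← normSq_eq_norm_sq, ← normSq_eq_norm_sq,
    normSq_apply, normSq_apply, add_re, add_im, ofReal_re, ofReal_im, add_zero]
  nlinarith [mul_nonneg hw hr]

lemma norm_hypCoeff_add_natCast_le (hc : 0 < c.re) (m n : ℕ) :
    ‖hypCoeff a b (c + m) n‖ ≤ ‖hypCoeff a b c n‖ := by
  induction n with
  | zero => simp only [hypCoeff_zero, le_refl]
  | succ n ih =>
    have hre : 0 < (c + n).re := by
      rw [add_re, natCast_re]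
      positivity
    have hpos : 0 < ‖c + n‖ := norm_pos_iff.2 fun h => hre.ne' (by rw [h, zero_re])
    have hle : ‖c + n‖ ≤ ‖c + m + n‖ := by
      rw [add_right_comm]
      exact_mod_cast norm_le_norm_add_ofReal hre.le m.cast_nonneg
    have hratio : ‖(a + n) * (b + n) / (c + m + n) / (n + 1)‖ ≤
        ‖(a + n) * (b + n) / (c + n) / (n + 1)‖ := by
      simp only [norm_div]
      gcongr
    rw [hypCoeff_succ, hypCoeff_succ, norm_mul (hypCoeff a b c n)]
    exact norm_mul_le_of_le ih hratio

lemma tendsto_hypCoeff_add_natCast (a b c : ℂ) (n : ℕ) :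
    Tendsto (fun m : ℕ => hypCoeff a b (c + m) n) atTop (𝓝 (if n = 0 then 1 else 0)) := by
  induction n with
  | zero => simp [hypCoeff_zero]
  | succ n ih =>
    have hinv : Tendsto (fun m : ℕ => (c + m + n)⁻¹) atTop (𝓝 0) := by
      have hcob : Tendsto (fun m : ℕ => (m : ℂ)) atTop (Bornology.cobounded ℂ) :=
        tendsto_norm_atTop_iff_cobounded.1 <| by
          simpa only [norm_natCast] using tendsto_natCast_atTop_atTop (R := ℝ)
      refine (tendsto_inv₀_cobounded.comp
        ((tendsto_const_add_cobounded (c + n)).comp hcob)).congr fun m => ?_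
      rw [Function.comp_apply, Function.comp_apply, add_right_comm]
    have hlim := (ih.mul hinv).mul_const ((a + n) * (b + n) / (n + 1))
    rw [mul_zero, zero_mul] at hlim
    rw [if_neg n.succ_ne_zero]
    refine hlim.congr fun m => ?_
    rw [hypCoeff_succ]
    ring

lemma tendsto_tsum_hypCoeff_add_natCast (h : (a + b).re < c.re) :
    Tendsto (fun m : ℕ => ∑' n, hypCoeff a b (c + m) n) atTop (𝓝 1) := by
  obtain ⟨M, hM⟩ := exists_nat_gt (-c.re)
  have hsum : Summable fun n => ‖hypCoeff a b (c + M) n‖ := by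
    refine (summable_hypCoeff ?_).norm
    rw [add_re c, natCast_re]
    linarith [M.cast_nonneg (α := ℝ)]
  rw [← tsum_ite_eq 0 fun _ => (1 : ℂ)]
  refine tendsto_tsum_of_dominated_convergence hsum (tendsto_hypCoeff_add_natCast a b c) ?_
  filter_upwards [eventually_ge_atTop M] with m hm n
  obtain ⟨k, rfl⟩ := Nat.exists_eq_add_of_le hm
  rw [Nat.cast_add, ← add_assoc]
  refine norm_hypCoeff_add_natCast_le ?_ k n
  rw [add_re, natCast_re]
  linarith

/-- **Gauss's summation theorem**. If `c - a` or `c - b` is a pole of `Γ`, then the sum is `0`,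
which is also the junk value that the right-hand side takes there. -/
theorem hasSum_hypCoeff (hc : ∀ k : ℕ, c ≠ -k) (h : (a + b).re < c.re) :
    HasSum (hypCoeff a b c)
      (Gamma c * Gamma (c - a - b) / (Gamma (c - a) * Gamma (c - b))) := by
  have hcab (k : ℕ) : c - a - b ≠ -k := by
    intro hk
    have hre := congrArg re hk
    simp only [sub_re, neg_re, natCast_re, add_re] at hre h
    linarith [k.cast_nonneg (α := ℝ)]
  have hlim := (tendsto_gammaSeq_mul_div_gammaSeq_mul c (c - a - b) (c - a) (c - b)).mul
    ((tendsto_tsum_hypCoeff_add_natCast h).comp (tendsto_add_atTop_nat 1))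
  rw [mul_one] at hlim
  have htsum : ∑' n, hypCoeff a b c n =
      Gamma c * Gamma (c - a - b) / (Gamma (c - a) * Gamma (c - b)) := by
    refine tendsto_nhds_unique (tendsto_const_nhds.congr' ?_) hlim
    filter_upwards [eventually_ne_atTop 0] with m hm
    have hbal : c - a + (c - b) - c - (c - a - b) = 0 := by ring
    have hratio := poch_mul_div_poch_mul (c - a) (c - b) c (c - a - b) hm
    rw [hbal, cpow_zero, one_mul] at hratio
    have := poch_ne_zero hc (m + 1)
    have := poch_ne_zero hcab (m + 1)
    rw [Function.comp_apply, ← hratio, div_mul_eq_mul_div, eq_div_iff (by positivity),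
      ← poch_mul_tsum_hypCoeff hc h, mul_comm]
  exact htsum ▸ (summable_hypCoeff h).hasSum

end GaussSummation

section PositiveCoefficients

open scoped ComplexOrder

lemma hasSum_norm_of_nonneg {ι 𝕜 : Type*} [RCLike 𝕜] {f : ι → 𝕜} {S : 𝕜} (hf : ∀ i, 0 ≤ f i)
    (hS : HasSum f S) : HasSum (fun i => ‖f i‖) ‖S‖ := by
  have hnorm (i : ι) : ((‖f i‖ : ℝ) : 𝕜) = f i := RCLike.norm_of_nonneg' (hf i)
  have hsum := hS.summable.norm.hasSum
  have hS' : S = ((∑' i, ‖f i‖ : ℝ) : 𝕜) := by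
    refine hS.unique ?_
    simpa only [hnorm] using RCLike.hasSum_ofReal 𝕜 |>.2 hsum
  rw [hS', RCLike.norm_ofReal, abs_of_nonneg (tsum_nonneg fun i => norm_nonneg (f i))]
  exact hsum

variable {a b c : ℂ}

lemma hypCoeff_nonneg (h : ∀ n : ℕ, 0 ≤ (a + n) * (b + n) / (c + n)) (n : ℕ) :
    0 ≤ hypCoeff a b c n := by
  induction n with
  | zero => simp only [hypCoeff_zero, zero_le_one]
  | succ n ih =>
    rw [hypCoeff_succ, div_eq_mul_inv _ ((n : ℂ) + 1)]
    have hinv : (0 : ℂ) ≤ ((n : ℂ) + 1)⁻¹ := by positivity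
    exact mul_nonneg ih (mul_nonneg (h n) hinv)

lemma hasSum_norm_hypCoeff (hc : ∀ k : ℕ, c ≠ -k) (h : (a + b).re < c.re)
    (hpos : ∀ n : ℕ, 0 ≤ (a + n) * (b + n) / (c + n)) :
    HasSum (fun n => ‖hypCoeff a b c n‖)
      ‖Gamma c * Gamma (c - a - b) / (Gamma (c - a) * Gamma (c - b))‖ :=
  hasSum_norm_of_nonneg (hypCoeff_nonneg hpos) (hasSum_hypCoeff hc h)

lemma bc2_eq_mul_hypCoeff (a b c α : ℂ) (n : ℕ) : bc2 a b c α n = α / 2 * hypCoeff a b c n := by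
  rw [bc2, hypCoeff_eq_poch, mul_div_assoc]

lemma succ_mul_norm_bc2_succ (a b c α : ℂ) (n : ℕ) :
    ((n + 1 : ℝ)) * ‖bc2 a b c α (n + 1)‖ =
      ‖α / 2 * (a * b / c)‖ * ‖hypCoeff (a + 1) (b + 1) (c + 1) n‖ := by
  have hn : ((n : ℝ) + 1) = ‖(n : ℂ) + 1‖ := by
    rw [← Nat.cast_succ, ← Nat.cast_succ, norm_natCast]
  rw [hn, ← norm_mul, ← norm_mul, bc2_eq_mul_hypCoeff, mul_left_comm, succ_mul_hypCoeff_succ,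
    mul_assoc]

lemma hasSum_succ_mul_norm_bc2_succ (α : ℂ) (hc : ∀ k : ℕ, c ≠ -k) (h : (a + b).re + 1 < c.re)
    (hpos : ∀ n : ℕ, 0 ≤ (a + 1 + n) * (b + 1 + n) / (c + 1 + n)) :
    HasSum (fun n : ℕ => ((n + 1 : ℝ)) * ‖bc2 a b c α (n + 1)‖)
      (‖a * b * α * (Gamma c * Gamma (c - a - b - 1) / (Gamma (c - a) * Gamma (c - b)))‖ / 2) := by
  have hc0 : c ≠ 0 := by simpa using hc 0
  have hc1 (k : ℕ) : c + 1 ≠ -k := by simpa using add_natCast_ne_neg hc 1 k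
  have h1 : (a + 1 + (b + 1)).re < (c + 1).re := by
    simp only [add_re, one_re] at h ⊢
    linarith
  have hsum := (hasSum_norm_hypCoeff hc1 h1 hpos).mul_left ‖α / 2 * (a * b / c)‖
  simp only [← succ_mul_norm_bc2_succ] at hsum
  have hΓ : c + 1 - (a + 1) - (b + 1) = c - a - b - 1 := by ring
  rw [← norm_mul, Gamma_add_one c hc0, hΓ, add_sub_add_right_eq_sub,
    add_sub_add_right_eq_sub] at hsum
  convert! hsum using 1
  rw [← RCLike.norm_two (K := ℂ), ← norm_div]
  congr 1
  field_simp

end PositiveCoefficients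

section PowerSeries

variable {𝕜 : Type*} [RCLike 𝕜] {f : ℕ → 𝕜}

lemma summable_natCast_mul_norm (hf : Summable fun n : ℕ => ((n + 1 : ℝ)) * ‖f (n + 1)‖) :
    Summable fun n : ℕ => (n : ℝ) * ‖f n‖ := by
  rw [← summable_nat_add_iff 1]
  simpa only [Nat.cast_add_one] using hf

lemma norm_mul_natCast_mul_pow_le (n : ℕ) {z : 𝕜} (hz : z ∈ ball (0 : 𝕜) 1) :
    ‖f n * (n * z ^ (n - 1))‖ ≤ (n : ℝ) * ‖f n‖ := by
  have hz1 : ‖z‖ ^ (n - 1) ≤ 1 := pow_le_one₀ (norm_nonneg z) (mem_ball_zero_iff.1 hz).le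
  rw [norm_mul, norm_mul, norm_pow, RCLike.norm_natCast, mul_comm ‖f n‖]
  gcongr
  exact mul_le_of_le_one_right n.cast_nonneg hz1

lemma hasDerivAt_tsum_mul_pow (hf : Summable fun n : ℕ => ((n + 1 : ℝ)) * ‖f (n + 1)‖)
    {z : 𝕜} (hz : z ∈ ball (0 : 𝕜) 1) :
    HasDerivAt (fun z => ∑' n : ℕ, f n * z ^ n) (∑' n : ℕ, f n * (n * z ^ (n - 1))) z := by
  have hzero : Summable fun n : ℕ => f n * (0 : 𝕜) ^ n := by
    refine summable_of_ne_finset_zero (s := {0}) fun n hn => ?_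
    rw [zero_pow (Finset.notMem_singleton.1 hn), mul_zero]
  exact hasDerivAt_tsum_of_isPreconnected (summable_natCast_mul_norm hf) isOpen_ball
    (convex_ball (0 : 𝕜) 1).isPreconnected (fun n y _ => (hasDerivAt_pow n y).const_mul (f n))
    (fun n _ hy => norm_mul_natCast_mul_pow_le n hy) (mem_ball_self one_pos) hzero hz

lemma norm_deriv_tsum_mul_pow_le (hf : Summable fun n : ℕ => ((n + 1 : ℝ)) * ‖f (n + 1)‖)
    {z : 𝕜} (hz : z ∈ ball (0 : 𝕜) 1) :
    ‖deriv (fun z => ∑' n : ℕ, f n * z ^ n) z‖ ≤ ∑' n : ℕ, ((n + 1 : ℝ)) * ‖f (n + 1)‖ := by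
  have hsum := summable_natCast_mul_norm hf
  calc ‖deriv (fun z => ∑' n : ℕ, f n * z ^ n) z‖
      = ‖∑' n : ℕ, f n * (n * z ^ (n - 1))‖ := by rw [(hasDerivAt_tsum_mul_pow hf hz).deriv]
    _ ≤ ∑' n : ℕ, (n : ℝ) * ‖f n‖ :=
        tsum_of_norm_bounded hsum.hasSum fun n => norm_mul_natCast_mul_pow_le n hz
    _ = ∑' n : ℕ, ((n + 1 : ℝ)) * ‖f (n + 1)‖ := by
        rw [hsum.tsum_eq_zero_add]
        simp only [Nat.cast_zero, zero_mul, zero_add, Nat.cast_add_one]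

end PowerSeries

section UniformlyStarlike

lemma re_div_pos_of_norm_sub_one_sq_add_lt {u v : ℂ} (h : ‖u - 1‖ ^ 2 + ‖v - 1‖ ^ 2 < 1) :
    0 < (u / v).re := by
  have hv : v ≠ 0 := by
    rintro rfl
    rw [zero_sub, norm_neg, norm_one] at h
    linarith [sq_nonneg ‖u - 1‖]
  have hpolar : 2 * (u.re * v.re + u.im * v.im) =
      normSq (u + v - 1) + (1 - normSq (u - 1) - normSq (v - 1)) := by
    simp only [normSq_apply, add_re, sub_re, one_re, add_im, sub_im, one_im]
    ring
  rw [← normSq_eq_norm_sq, ← normSq_eq_norm_sq] at h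
  rw [div_re, ← add_div]
  refine div_pos ?_ (normSq_pos.2 hv)
  linarith [normSq_nonneg (u + v - 1)]

variable {g : ℂ → ℂ} {r : ℝ}

lemma re_add_conj_sub_div_pos (hr : 2 * r ^ 2 < 1) (hg : DifferentiableOn ℂ g (ball 0 1))
    (hg' : ∀ z ∈ ball (0 : ℂ) 1, ‖deriv g z‖ ≤ r) {z ζ : ℂ} (hz : z ∈ ball (0 : ℂ) 1)
    (hζ : ζ ∈ ball (0 : ℂ) 1) (hne : z ≠ ζ) :
    0 < (((z + conj (g z)) - (ζ + conj (g ζ))) /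
      ((z - ζ) - conj (z - ζ) * conj (deriv g z))).re := by
  have hw : z - ζ ≠ 0 := sub_ne_zero.2 hne
  have hnum : ((z + conj (g z)) - (ζ + conj (g ζ))) / (z - ζ) - 1 =
      conj (g z - g ζ) / (z - ζ) := by
    rw [map_sub]
    field_simp
    ring
  have hden : ((z - ζ) - conj (z - ζ) * conj (deriv g z)) / (z - ζ) - 1 =
      -(conj ((z - ζ) * deriv g z) / (z - ζ)) := by
    rw [map_mul]
    field_simp
    ring
  have hlip : ‖g z - g ζ‖ ≤ r * ‖z - ζ‖ :=
    (convex_ball 0 1).norm_image_sub_le_of_norm_deriv_le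
      (fun x hx => hg.differentiableAt (isOpen_ball.mem_nhds hx)) hg' hζ hz
  rw [← div_div_div_cancel_right₀ hw]
  refine re_div_pos_of_norm_sub_one_sq_add_lt ?_
  rw [hnum, hden, norm_neg, norm_div, norm_div, RCLike.norm_conj, RCLike.norm_conj, norm_mul,
    mul_div_cancel_left₀ _ (norm_ne_zero_iff.2 hw)]
  calc (‖g z - g ζ‖ / ‖z - ζ‖) ^ 2 + ‖deriv g z‖ ^ 2 ≤ r ^ 2 + r ^ 2 := by
        gcongr
        · exact (div_le_iff₀ (norm_pos_iff.2 hw)).2 hlip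
        · exact hg' z hz
    _ < 1 := by linarith

lemma uniformlyStarlikeOnDisk_of_norm_deriv_le (hr : 2 * r ^ 2 < 1) (hg0 : g 0 = 0)
    (hg : DifferentiableOn ℂ g (ball 0 1)) (hg' : ∀ z ∈ ball (0 : ℂ) 1, ‖deriv g z‖ ≤ r) :
    UniformlyStarlikeOnDisk (fun z => z) g := by
  have hpos {z ζ : ℂ} := re_add_conj_sub_div_pos (z := z) (ζ := ζ) hr hg hg'
  simp only [UniformlyStarlikeOnDisk, deriv_id'', norm_one, mul_one]
  refine ⟨by simp [hg0], fun z hz => ?_, fun z hz ζ hζ hne => (hpos hz hζ hne).le,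
    fun z hz hne => ?_⟩
  · have hr1 : r < 1 := by nlinarith
    exact (hg' z hz).trans_lt hr1
  · simpa [hg0] using hpos hz (mem_ball_self one_pos) hne

lemma uniformlyStarlikeOnDisk_of_tsum_le {f : ℕ → ℂ} (hr : 2 * r ^ 2 < 1)
    (hf : Summable fun n : ℕ => ((n + 1 : ℝ)) * ‖f (n + 1)‖)
    (hle : ∑' n : ℕ, ((n + 1 : ℝ)) * ‖f (n + 1)‖ ≤ r) :
    UniformlyStarlikeOnDisk (fun z => z) (fun z => (∑' n : ℕ, f n * z ^ n) - f 0) := by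
  refine uniformlyStarlikeOnDisk_of_norm_deriv_le hr ?_ ?_ ?_
  · rw [tsum_eq_single 0 fun n hn => by rw [zero_pow hn, mul_zero], pow_zero, mul_one, sub_self]
  · exact fun z hz => ((hasDerivAt_tsum_mul_pow hf hz).sub_const
      (f 0)).differentiableAt.differentiableWithinAt
  · intro z hz
    rw [deriv_sub_const]
    exact (norm_deriv_tsum_mul_pow_le hf hz).trans hle

end UniformlyStarlike

section MainTheorem

open scoped ComplexOrder

lemma mul_hypF_sub_one_eq_tsum (a b c α z : ℂ) :
    α / 2 * (hypF a b c z - 1) = (∑' n : ℕ, bc2 a b c α n * z ^ n) - bc2 a b c α 0 := by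
  have hzero : bc2 a b c α 0 = α / 2 := by
    rw [bc2_eq_mul_hypCoeff, hypCoeff_zero, mul_one]
  rw [hzero, mul_sub, mul_one, hypF, ← tsum_mul_left]
  simp only [bc2, mul_div_assoc, mul_assoc]

lemma ofReal_ne_neg_natCast {x : ℝ} (hx : 0 < x) (k : ℕ) : (x : ℂ) ≠ -k := by
  have hk : x ≠ -(k : ℝ) := by linarith [k.cast_nonneg (α := ℝ)]
  exact_mod_cast hk

lemma add_one_add_mul_div_nonneg {a b : ℂ} {c : ℝ}
    (hab : (∃ a' b' : ℝ, a = (a' : ℂ) ∧ b = (b' : ℂ) ∧ -1 < a' ∧ -1 < b') ∨ b = conj a)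
    (hc : -1 < c) (n : ℕ) : 0 ≤ (a + 1 + n) * (b + 1 + n) / (c + 1 + n) := by
  have nonneg {x : ℝ} (hx : -1 < x) : 0 ≤ x + 1 + n := by linarith [n.cast_nonneg (α := ℝ)]
  rcases hab with ⟨a', b', rfl, rfl, ha, hb⟩ | rfl
  · exact_mod_cast div_nonneg (mul_nonneg (nonneg ha) (nonneg hb)) (nonneg hc)
  · have hconj : conj a + 1 + n = conj (a + 1 + n) := by
      simp only [map_add, map_one, map_natCast]
    rw [hconj, mul_conj]
    exact_mod_cast div_nonneg (normSq_nonneg (a + 1 + n)) (nonneg hc)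

theorem hypergeom_uniformly_starlike_b_general {a b c : ℂ} (α : ℂ) (hc : ∀ k : ℕ, c ≠ -k)
    (h : (a + b).re + 1 < c.re)
    (hpos : ∀ n : ℕ, 0 ≤ (a + 1 + n) * (b + 1 + n) / (c + 1 + n))
    (hQ : ‖a * b * α *
      (Gamma c * Gamma (c - a - b - 1) / (Gamma (c - a) * Gamma (c - b)))‖ ≤ 1) :
    (Summable fun n : ℕ => ((n + 1 : ℝ)) * ‖bc2 a b c α (n + 1)‖) ∧
    (∑' n : ℕ, ((n + 1 : ℝ)) * ‖bc2 a b c α (n + 1)‖) ≤ 1 / 2 ∧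
    UniformlyStarlikeOnDisk (fun z => z) (fun z => α / 2 * (hypF a b c z - 1)) := by
  have hsum := hasSum_succ_mul_norm_bc2_succ α hc h hpos
  have hle : (∑' n : ℕ, ((n + 1 : ℝ)) * ‖bc2 a b c α (n + 1)‖) ≤ 1 / 2 := by
    rw [hsum.tsum_eq]
    gcongr
  refine ⟨hsum.summable, hle, ?_⟩
  simp only [mul_hypF_sub_one_eq_tsum]
  exact uniformlyStarlikeOnDisk_of_tsum_le (by norm_num) hsum.summable hle

end MainTheorem

/-- Theorem 5(b): under the stated conditions on `a, b, c, α`, the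
coefficients of `g₂(z) = (α/2)(F(a,b;c;z) - 1)` satisfy `∑_{n≥1} n|bₙ| ≤ 1/2`;
consequently `f₂(z) = z + conj(g₂(z))` is uniformly starlike in `𝔻`. -/
theorem hypergeom_uniformly_starlike_b (a b : ℂ)
    (hab : (∃ a' b' : ℝ, a = (a' : ℂ) ∧ b = (b' : ℂ) ∧ -1 < a' ∧ -1 < b' ∧ 0 < a' * b') ∨
           (a ≠ 0 ∧ b ≠ 0 ∧ b = conj a))
    (c : ℝ) (hc : 0 < c) (hc1 : (a + b).re + 1 < c)
    (α : ℂ) (hα : ‖α‖ < 1)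
    (hQ : ∃ q : ℝ, 0 < q ∧ q ≤ 1 ∧
      (q : ℂ) = a * b * (‖α‖ : ℂ) * (Complex.Gamma (c : ℂ)
          * Complex.Gamma ((c : ℂ) - a - b - 1)
          / (Complex.Gamma ((c : ℂ) - a) * Complex.Gamma ((c : ℂ) - b)))) :
    (Summable fun n : ℕ => ((n + 1 : ℝ)) * ‖bc2 a b (c : ℂ) α (n + 1)‖) ∧
    (∑' n : ℕ, ((n + 1 : ℝ)) * ‖bc2 a b (c : ℂ) α (n + 1)‖) ≤ 1 / 2 ∧
    UniformlyStarlikeOnDisk (fun z => z)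
      (fun z => α / 2 * (hypF a b (c : ℂ) z - 1)) := by
  obtain ⟨q, hq0, hq1, hq⟩ := hQ
  refine hypergeom_uniformly_starlike_b_general α (ofReal_ne_neg_natCast hc) hc1
    (add_one_add_mul_div_nonneg ?_ (by linarith)) (Eq.trans_le ?_ hq1)
  · exact hab.imp (fun ⟨x, y, hx, hy, hx1, hy1, _⟩ => ⟨x, y, hx, hy, hx1, hy1⟩) fun h => h.2.2
  · rw [← Real.norm_of_nonneg hq0.le, ← norm_real, hq]
    simp only [norm_mul, norm_real, norm_norm]
end
end
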